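/- arXiv:0911.3565 — 2 statements merged into one kernel-verified Lean document; each statement's English description precedes it below -/
import Mathlib

section
/- Let m ≥ n, and let A = A_F and B = A_G be Artinian Gorenstein local K-algebras with Hilbert function {1,m,n,1}, where F, G ∈ K[y_1,…,y_m] are polynomials of degree three with top-degree (cubic) forms F_3 and G_3. Then A and B are isomorphic as K-algebras if and only if Q_A(0) = R/Ann_R(F_3) and Q_B(0) = R/Ann_R(G_3) are isomorphic as K-algebras. -/
/-- The contraction (derivative) action of the power series ring
`R = K[[x_1,…,x_n]]` on the polynomial ring `P = K[y_1,…,y_n]`: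
`f ∘ g = f(∂/∂y_1, …, ∂/∂y_n)(g)`.  It is defined on the monomial basis by
`x^α ∘ y^β = (∏ i, (β i)!/(β i - α i)!) y^(β-α)` (zero unless `α ≤ β`), the honest
iterated partial derivative, and extended `K`-linearly. -/
noncomputable def contract {K : Type*} [Field K] {n : ℕ} (f : MvPowerSeries (Fin n) K) :
    MvPolynomial (Fin n) K →ₗ[K] MvPolynomial (Fin n) K :=
  (MvPolynomial.basisMonomials (Fin n) K).constr K fun β =>
    ∑ α ∈ Finset.Iic β,
      (MvPowerSeries.coeff α f * ∏ i, ((β i).descFactorial (α i) : K)) •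
        MvPolynomial.monomial (β - α) (1 : K)

theorem contract_add {K : Type*} [Field K] {n : ℕ} (f g : MvPowerSeries (Fin n) K) :
    contract (f + g) = contract f + contract g := by
  unfold contract
  rw [← map_add]
  congr 1
  funext β
  simp only [Pi.add_apply]
  rw [← Finset.sum_add_distrib]
  exact Finset.sum_congr rfl fun α _ => by rw [map_add, add_mul, add_smul]

theorem contract_zero {K : Type*} [Field K] {n : ℕ} :
    contract (0 : MvPowerSeries (Fin n) K) = 0 := by
  unfold contract
  convert map_zero ((MvPolynomial.basisMonomials (Fin n) K).constr
    (M' := MvPolynomial (Fin n) K) K) using 2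
  funext β
  simp

/-- The annihilator `Ann_R(F) = Ann_R(⟨F⟩_R)` of (the cyclic `R`-submodule of
`P` generated by) a polynomial `F` under the contraction action; an ideal of
`R = K[[x_1,…,x_n]]`.  The Artinian Gorenstein local algebra associated to `F`
is `A_F = R ⧸ annR F`. -/
noncomputable def annR {K : Type*} [Field K] {n : ℕ} (F : MvPolynomial (Fin n) K) :
    Ideal (MvPowerSeries (Fin n) K) where
  carrier := {f | ∀ u : MvPowerSeries (Fin n) K, contract (u * f) F = 0}
  zero_mem' := fun u => by rw [mul_zero, contract_zero]; rfl
  add_mem' := fun {a b} ha hb u => by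
    rw [mul_add, contract_add, LinearMap.add_apply, ha u, hb u, add_zero]
  smul_mem' := fun c f hf u => by
    rw [smul_eq_mul, ← mul_assoc]; exact hf (u * c)

/-- The maximal ideal `M = (x_1, …, x_n)` of `R = K[[x_1,…,x_n]]`,
i.e. the ideal of power series with zero constant term. -/
noncomputable def mxR (K : Type*) [Field K] (n : ℕ) : Ideal (MvPowerSeries (Fin n) K) :=
  RingHom.ker (MvPowerSeries.constantCoeff (σ := Fin n) (R := K))

/-- The Hilbert function of `A = R/I` where `R = K[[x_1,…,x_n]]`:
`HF_A(i) = dim_K (m^i/m^(i+1)) = dim_K A/m^(i+1) - dim_K A/m^i`, computed via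
`A/m^j = R/(I + M^j)` where `M = (x_1,…,x_n)`. -/
noncomputable def hilbQ {K : Type*} [Field K] {n : ℕ}
    (I : Ideal (MvPowerSeries (Fin n) K)) (i : ℕ) : ℕ :=
  Module.finrank K (MvPowerSeries (Fin n) K ⧸ (I ⊔ mxR K n ^ (i + 1))) -
    Module.finrank K (MvPowerSeries (Fin n) K ⧸ (I ⊔ mxR K n ^ i))

/-!
The algebra `A_F` is the quotient of the polynomial ring by the largest ideal contained in the
kernel of the functional `Λ_F : p ↦ (p ∘ F)(0)`. On products of three linear forms `Λ_F` is a
symmetric trilinear form, the polarization of `F₃`; since its values on the socle are determined up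
to a scalar, the linear part of an isomorphism `A_F ≅ A_G` multiplies these trilinear forms by a
constant `c ≠ 0`.

Conversely, let `N` be an invertible linear substitution that multiplies the trilinear forms by `c`
and also multiplies by `c` the quadratic parts of `Λ_F` and `Λ_G` on the radicals of these forms.
Every linear functional vanishing on the radical is `v ↦ Λ_G(q v)` for some `q` of order two, so
adding such `q` to `N` corrects the values on products of two linear forms, and adding socle
elements corrects those on linear forms. The resulting endomorphism `φ` satisfies `Λ_G ∘ φ = c Λ_F`
on the maximal ideal, hence identifies `A_F` with `A_G`.

The condition on the radicals can always be met. For a form `F = F₃` the quadratic part vanishes.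
When the Hilbert function is `m` in degree one, the annihilator of `F` has order at least two, which
makes the quadratic part nondegenerate on the radical, and over a field with square roots
nondegenerate symmetric bilinear forms of equal rank are isometric.
-/

namespace ApolarAlgebra

open MvPolynomial

section ApolarIdeal

variable {K A B : Type*} [CommRing K] [CommRing A] [Algebra K A] [CommRing B] [Algebra K B]

/-- The largest ideal contained in the kernel of a linear functional. An Artinian Gorenstein
algebra is the quotient by such an ideal, for a functional called its dual socle generator. -/
def apolarIdeal (Λ : Module.Dual K A) : Ideal A where
  carrier := {a | ∀ u, Λ (u * a) = 0}
  zero_mem' := fun u => by rw [mul_zero, map_zero]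
  add_mem' := fun ha hb u => by rw [mul_add, map_add, ha u, hb u, add_zero]
  smul_mem' := fun c a ha u => by rw [smul_eq_mul, ← mul_assoc, ha]

lemma apply_eq_zero_of_mem_apolarIdeal {Λ : Module.Dual K A} {a : A} (ha : a ∈ apolarIdeal Λ) :
    Λ a = 0 := by
  rw [← one_mul a, ha]

lemma le_apolarIdeal {Λ : Module.Dual K A} {I : Ideal A} (h : ∀ a ∈ I, Λ a = 0) :
    I ≤ apolarIdeal Λ :=
  fun _ ha u => h _ (I.mul_mem_left u ha)

lemma comap_apolarIdeal (Λ : Module.Dual K A) (φ : B →ₐ[K] A)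
    (hφ : ∀ a, ∃ b, a - φ b ∈ apolarIdeal Λ) :
    (apolarIdeal Λ).comap φ = apolarIdeal (Λ ∘ₗ φ.toLinearMap) := by
  ext x
  refine ⟨fun hx u => ?_, fun hx a => ?_⟩
  · simpa only [map_mul, LinearMap.comp_apply, AlgHom.toLinearMap_apply] using hx (φ u)
  · obtain ⟨b, hb⟩ := hφ a
    have hb' : Λ ((a - φ b) * φ x) = 0 := by rw [mul_comm]; exact hb (φ x)
    have hbx : Λ (φ b * φ x) = 0 := by
      simpa only [map_mul, LinearMap.comp_apply, AlgHom.toLinearMap_apply] using hx b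
    rwa [sub_mul, map_sub, hbx, sub_zero] at hb'

lemma apolarIdeal_le_of_apply_eq_mul [NoZeroDivisors K] {Λ Λ' : Module.Dual K A} {I : Ideal A}
    {c : K} (hc : c ≠ 0) (hI : apolarIdeal Λ' ≤ I) (h : ∀ a ∈ I, Λ' a = c * Λ a) :
    apolarIdeal Λ' ≤ apolarIdeal Λ := by
  intro a ha u
  have hcu := h _ (I.mul_mem_left u (hI ha))
  rw [ha, zero_eq_mul] at hcu
  exact hcu.resolve_left hc

lemma apolarIdeal_eq_of_apply_eq_mul [NoZeroDivisors K] {Λ Λ' : Module.Dual K A} {I : Ideal A}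
    {c : K} (hc : c ≠ 0) (hI : apolarIdeal Λ ≤ I) (hI' : apolarIdeal Λ' ≤ I)
    (h : ∀ a ∈ I, Λ' a = c * Λ a) : apolarIdeal Λ = apolarIdeal Λ' :=
  le_antisymm (fun a ha u => by rw [h _ (I.mul_mem_left u (hI ha)), ha, mul_zero])
    (apolarIdeal_le_of_apply_eq_mul hc hI' h)

lemma nonempty_algEquiv_quotient_of_comap_eq {I : Ideal B} {J : Ideal A} (φ : B →ₐ[K] A)
    (hIJ : J.comap φ = I) (hφ : ∀ a, ∃ b, a - φ b ∈ J) :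
    Nonempty ((B ⧸ I) ≃ₐ[K] A ⧸ J) := by
  let ψ : B →ₐ[K] A ⧸ J := (Ideal.Quotient.mkₐ K J).comp φ
  have hψ : Function.Surjective ψ := fun y => by
    obtain ⟨a, rfl⟩ := Ideal.Quotient.mk_surjective y
    obtain ⟨b, hb⟩ := hφ a
    exact ⟨b, (Ideal.Quotient.eq.2 hb).symm⟩
  have hker : RingHom.ker ψ = I := by
    rw [← hIJ]
    ext b
    exact Ideal.Quotient.eq_zero_iff_mem
  exact ⟨(Ideal.quotientEquivAlgOfEq K hker.symm).trans (Ideal.quotientKerAlgEquivOfSurjective hψ)⟩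

end ApolarIdeal

section Adic

variable {K A : Type*} [CommRing A] {I : Ideal A}

lemma mul_mem_pow_of_le {a b : A} {k l n : ℕ} (ha : a ∈ I ^ k) (hb : b ∈ I ^ l) (h : n ≤ k + l) :
    a * b ∈ I ^ n :=
  Ideal.pow_le_pow_right h (pow_add I k l ▸ Ideal.mul_mem_mul ha hb)

lemma mul_sub_mul_mem_pow {a a' b b' : A} {k l : ℕ} (ha' : a' ∈ I ^ k) (hb : b ∈ I ^ l)
    (haa' : a - a' ∈ I ^ (k + 1)) (hbb' : b - b' ∈ I ^ (l + 1)) :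
    a * b - a' * b' ∈ I ^ (k + l + 1) := by
  rw [show a * b - a' * b' = (a - a') * b + a' * (b - b') by ring]
  exact add_mem (mul_mem_pow_of_le haa' hb (by omega)) (mul_mem_pow_of_le ha' hbb' (by omega))

variable [CommRing K] [Algebra K A] {B : Subalgebra K A}

lemma exists_mem_sub_mem_pow_succ (h₀ : ∀ a, ∃ b ∈ B, a - b ∈ I)
    (h₁ : ∀ a ∈ I, ∃ b ∈ B, a - b ∈ I ^ 2) {k : ℕ} {a : A} (ha : a ∈ I ^ k) :
    ∃ b ∈ B, a - b ∈ I ^ (k + 1) := by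
  induction k generalizing a with
  | zero => simpa using h₀ a
  | succ k ih =>
    rw [pow_succ] at ha
    refine Submodule.mul_induction_on ha (fun x hx y hy => ?_) fun x y ⟨b, hb, hxb⟩ ⟨d, hd, hyd⟩ =>
      ⟨b + d, add_mem hb hd, by rw [add_sub_add_comm]; exact add_mem hxb hyd⟩
    obtain ⟨b, hb, hxb⟩ := ih hx
    obtain ⟨d, hd, hyd⟩ := h₁ y hy
    have hbk : b ∈ I ^ k :=
      (Submodule.sub_mem_iff_right _ hx).1 (Ideal.pow_le_pow_right k.le_succ hxb)
    exact ⟨b * d, mul_mem hb hd, mul_sub_mul_mem_pow hbk (by rwa [pow_one]) hxb hyd⟩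

lemma exists_mem_sub_mem_pow (h₀ : ∀ a, ∃ b ∈ B, a - b ∈ I)
    (h₁ : ∀ a ∈ I, ∃ b ∈ B, a - b ∈ I ^ 2) (k : ℕ) (a : A) : ∃ b ∈ B, a - b ∈ I ^ k := by
  induction k with
  | zero => exact ⟨0, zero_mem B, by simp⟩
  | succ k ih =>
    obtain ⟨b, hb, hab⟩ := ih
    obtain ⟨d, hd, hbd⟩ := exists_mem_sub_mem_pow_succ h₀ h₁ hab
    exact ⟨b + d, add_mem hb hd, by rwa [← sub_sub]⟩

end Adic

section LinearForm

variable {σ K A : Type*} [CommRing K] [CommRing A] [Algebra K A]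

lemma mem_idealOfVars_iff {p : MvPolynomial σ K} :
    p ∈ idealOfVars σ K ↔ constantCoeff p = 0 := by
  rw [← pow_one (idealOfVars σ K), mem_pow_idealOfVars_iff']
  simp only [Nat.lt_one_iff, Finsupp.degree_eq_zero_iff, forall_eq]
  rfl

lemma sub_C_mem (p : MvPolynomial σ K) : p - C (constantCoeff p) ∈ idealOfVars σ K := by
  rw [mem_idealOfVars_iff, map_sub, constantCoeff_C, sub_self]

lemma exists_algHom_lift_quotient {I : Ideal (MvPolynomial σ K)} {J : Ideal A}
    (Ψ : (MvPolynomial σ K ⧸ I) →ₐ[K] A ⧸ J) :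
    ∃ φ : MvPolynomial σ K →ₐ[K] A,
      ∀ p, Ideal.Quotient.mk J (φ p) = Ψ (Ideal.Quotient.mk I p) := by
  choose x hx using fun i => Ideal.Quotient.mk_surjective (Ψ (Ideal.Quotient.mk I (X i)))
  suffices h : (Ideal.Quotient.mkₐ K J).comp (aeval x) = Ψ.comp (Ideal.Quotient.mkₐ K I) from
    ⟨aeval x, fun p => DFunLike.congr_fun h p⟩
  refine algHom_ext fun i => ?_
  simpa only [AlgHom.comp_apply, aeval_X, Ideal.Quotient.mkₐ_eq_mk] using hx i

/-- The vector of coefficients of the variables in a polynomial. -/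
noncomputable def linearPart : MvPolynomial σ K →ₗ[K] σ → K :=
  LinearMap.pi fun i => lcoeff K (Finsupp.single i 1)

lemma linearPart_eq_zero {p : MvPolynomial σ K} (hp : p ∈ idealOfVars σ K ^ 2) :
    linearPart p = 0 :=
  funext fun i => (mem_pow_idealOfVars_iff' 2 p).1 hp _ (by simp)

variable [Fintype σ]

/-- The linear form `∑ i, v i • X i` with coefficient vector `v`. -/
noncomputable def linearForm : (σ → K) →ₗ[K] MvPolynomial σ K :=
  Fintype.linearCombination K X

lemma linearForm_single [DecidableEq σ] (i : σ) :
    linearForm (Pi.single i (1 : K)) = (X i : MvPolynomial σ K) := by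
  rw [linearForm, Fintype.linearCombination_apply_single, one_smul]

lemma linearForm_mem (v : σ → K) : linearForm v ∈ idealOfVars σ K :=
  Ideal.sum_mem _ fun i _ => Submodule.smul_of_tower_mem _ (v i) (Ideal.subset_span ⟨i, rfl⟩)

lemma linearForm_mul_mem (u v : σ → K) : linearForm u * linearForm v ∈ idealOfVars σ K ^ 2 :=
  pow_two (idealOfVars σ K) ▸ Ideal.mul_mem_mul (linearForm_mem u) (linearForm_mem v)

lemma linearForm_mul_mul_mem (u v w : σ → K) :
    linearForm u * linearForm v * linearForm w ∈ idealOfVars σ K ^ 3 :=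
  pow_succ (idealOfVars σ K) 2 ▸ Ideal.mul_mem_mul (linearForm_mul_mem u v) (linearForm_mem w)

lemma linearPart_linearForm (v : σ → K) : linearPart (linearForm v) = v := by
  classical
  suffices h : linearPart ∘ₗ linearForm = LinearMap.id (R := K) (M := σ → K) from
    LinearMap.congr_fun h v
  refine LinearMap.pi_ext' fun i => LinearMap.ext_ring ?_
  simp only [LinearMap.comp_apply, LinearMap.single_apply, LinearMap.id_apply, linearForm_single]
  ext j
  simp only [linearPart, LinearMap.pi_apply, lcoeff_apply, coeff_X,
    Finsupp.single_left_inj one_ne_zero, Pi.single_apply, eq_comm]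

lemma sub_linearForm_mem {p : MvPolynomial σ K} (hp : p ∈ idealOfVars σ K) :
    p - linearForm (linearPart p) ∈ idealOfVars σ K ^ 2 := by
  rw [mem_pow_idealOfVars_iff']
  intro d hd
  rcases Nat.lt_succ_iff_lt_or_eq.1 hd with hd | hd
  · rw [Nat.lt_one_iff, Finsupp.degree_eq_zero_iff] at hd
    exact hd ▸ mem_idealOfVars_iff.1 (sub_mem hp (linearForm_mem _))
  · obtain ⟨i, rfl⟩ : ∃ i, d = Finsupp.single i 1 := (Finsupp.sum_eq_one_iff d).1 hd
    have h := congrFun (linearPart_linearForm (linearPart p)) i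
    rw [coeff_sub, sub_eq_zero]
    exact h.symm

lemma apply_eq_zero_of_forall_prod_linearForm (Θ : Module.Dual K (MvPolynomial σ K)) {k : ℕ}
    (hΘ : ∀ p ∈ idealOfVars σ K ^ (k + 1), Θ p = 0)
    (h : ∀ v : Fin k → σ → K, Θ (∏ i, linearForm (v i)) = 0) {p : MvPolynomial σ K}
    (hp : p ∈ idealOfVars σ K ^ k) : Θ p = 0 := by
  induction k generalizing Θ p with
  | zero =>
    have hc : Θ (C (constantCoeff p)) = 0 := by
      rw [← mul_one (C _), ← smul_eq_C_mul, map_smul, ← Fin.prod_univ_zero, h ![], smul_zero]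
    rw [← sub_add_cancel p (C (constantCoeff p)), map_add, hc, add_zero]
    exact hΘ _ (by simpa using sub_C_mem p)
  | succ k ih =>
    rw [pow_succ] at hp
    refine Submodule.mul_induction_on hp (fun a ha b hb => ?_) fun x y hx hy => by
      rw [map_add, hx, hy, add_zero]
    have hlin : Θ (a * linearForm (linearPart b)) = 0 :=
      ih (Θ ∘ₗ LinearMap.mulRight K (linearForm (linearPart b)))
        (fun q hq => hΘ _ (Ideal.mul_mem_mul hq (linearForm_mem _)))
        (fun v => by
          simpa only [LinearMap.comp_apply, LinearMap.mulRight_apply, Fin.prod_univ_castSucc,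
            Fin.snoc_castSucc, Fin.snoc_last] using
            h (Fin.snoc v (linearPart b))) ha
    rw [← sub_add_cancel b (linearForm (linearPart b)), mul_add, map_add, hlin, add_zero]
    exact hΘ _ (mul_mem_pow_of_le ha (sub_linearForm_mem hb) le_rfl)

lemma exists_algHom_linearForm_eq (g : (σ → K) →ₗ[K] A) :
    ∃ φ : MvPolynomial σ K →ₐ[K] A, ∀ v, φ (linearForm v) = g v := by
  classical
  let φ : MvPolynomial σ K →ₐ[K] A := aeval fun i => g (Pi.single i 1)
  suffices h : φ.toLinearMap ∘ₗ linearForm = g from ⟨φ, LinearMap.congr_fun h⟩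
  refine LinearMap.pi_ext' fun i => LinearMap.ext_ring ?_
  simp only [φ, LinearMap.comp_apply, LinearMap.single_apply, linearForm_single,
    AlgHom.toLinearMap_apply, aeval_X]

lemma map_mem_pow_of_forall_linearForm {J : Ideal A} {φ : MvPolynomial σ K →ₐ[K] A}
    (hφ : ∀ v, φ (linearForm v) ∈ J) {k : ℕ} {p : MvPolynomial σ K}
    (hp : p ∈ idealOfVars σ K ^ k) : φ p ∈ J ^ k := by
  classical
  have hmap : (idealOfVars σ K).map φ ≤ J := by
    rw [idealOfVars, Ideal.map_span, Ideal.span_le]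
    rintro _ ⟨_, ⟨i, rfl⟩, rfl⟩
    exact linearForm_single (K := K) i ▸ hφ _
  refine Ideal.pow_right_mono hmap k ?_
  rw [← Ideal.map_pow]
  exact Ideal.mem_map_of_mem φ hp

end LinearForm

section TrilinearForm

variable {K V V₁ V₂ : Type*} [Field K] [AddCommGroup V] [Module K V]
  [AddCommGroup V₁] [Module K V₁] [AddCommGroup V₂] [Module K V₂]

lemma exists_projection_along (W : Submodule K V) :
    ∃ p : V →ₗ[K] V, (∀ w ∈ W, p w = 0) ∧ ∀ x, x - p x ∈ W := by
  obtain ⟨s, hs⟩ := W.mkQ.exists_rightInverse_of_surjective W.range_mkQ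
  refine ⟨s ∘ₗ W.mkQ, fun w hw => ?_, fun x => ?_⟩
  · rw [LinearMap.comp_apply, Submodule.mkQ_apply, (Submodule.Quotient.mk_eq_zero W).2 hw, map_zero]
  · exact (Submodule.Quotient.eq W).1 (LinearMap.congr_fun hs (W.mkQ x)).symm

lemma exists_bilin_add_swap_eq (h2 : (2 : K) ≠ 0) {W : Submodule K V} {d : LinearMap.BilinForm K V}
    (hd : ∀ u v, d u v = d v u) (hdW : ∀ u ∈ W, ∀ v ∈ W, d u v = 0) :
    ∃ B : LinearMap.BilinForm K V, (∀ u, ∀ v ∈ W, B u v = 0) ∧ ∀ u v, B u v + B v u = d u v := by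
  obtain ⟨p, hpW, hp⟩ := exists_projection_along W
  have hB : ∀ u v, d.compl₁₂ (LinearMap.id - (2⁻¹ : K) • p) p u v =
      d u (p v) - 2⁻¹ * d (p u) (p v) := fun u v => by
    simp only [LinearMap.compl₁₂_apply, LinearMap.sub_apply, LinearMap.smul_apply,
      LinearMap.id_apply, map_sub, map_smul, smul_eq_mul]
  refine ⟨d.compl₁₂ (LinearMap.id - (2⁻¹ : K) • p) p, fun u v hv => ?_, fun u v => ?_⟩
  · rw [hB, hpW v hv, map_zero, map_zero, mul_zero, sub_zero]
  · have hW := hdW _ (hp u) _ (hp v)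
    simp only [map_sub, LinearMap.sub_apply] at hW
    rw [hB, hB, hd v (p u), hd (p v) (p u)]
    linear_combination (-1 : K) * hW - d (p u) (p v) * mul_inv_cancel₀ h2

/-- Invariance of a trilinear form under transpositions of neighbouring arguments, hence under all
permutations. -/
structure IsSymmTrilinear (T : V →ₗ[K] V →ₗ[K] V →ₗ[K] K) : Prop where
  swap_left : ∀ u v w, T u v w = T v u w
  swap_right : ∀ u v w, T u v w = T u w v

lemma IsSymmTrilinear.apply_congr {T : V →ₗ[K] V →ₗ[K] V →ₗ[K] K} (hT : IsSymmTrilinear T)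
    {u u' v v' w w' : V} (hu : u - u' ∈ LinearMap.ker T) (hv : v - v' ∈ LinearMap.ker T)
    (hw : w - w' ∈ LinearMap.ker T) : T u v w = T u' v' w' := by
  simp only [LinearMap.mem_ker, map_sub, sub_eq_zero] at hu hv hw
  rw [hu, hT.swap_left, hv, hT.swap_right, hT.swap_left, hw, hT.swap_left, hT.swap_right,
    hT.swap_left]

/-- `L` multiplies trilinear forms by a nonzero factor `c`. -/
structure IsSimilitude (T₁ : V₁ →ₗ[K] V₁ →ₗ[K] V₁ →ₗ[K] K) (T₂ : V₂ →ₗ[K] V₂ →ₗ[K] V₂ →ₗ[K] K)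
    (c : K) (L : V₁ →ₗ[K] V₂) : Prop where
  ne_zero : c ≠ 0
  map_apply : ∀ u v w, T₂ (L u) (L v) (L w) = c * T₁ u v w

variable {T₁ : V₁ →ₗ[K] V₁ →ₗ[K] V₁ →ₗ[K] K} {T₂ : V₂ →ₗ[K] V₂ →ₗ[K] V₂ →ₗ[K] K} {c : K}

namespace IsSimilitude

lemma mem_ker_of_map_mem_ker {L : V₁ →ₗ[K] V₂} (hL : IsSimilitude T₁ T₂ c L) {w : V₁}
    (hw : L w ∈ LinearMap.ker T₂) : w ∈ LinearMap.ker T₁ := by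
  ext u v
  have h := hL.map_apply w u v
  rw [LinearMap.mem_ker.1 hw, LinearMap.zero_apply, LinearMap.zero_apply, zero_eq_mul] at h
  exact h.resolve_left hL.ne_zero

lemma finrank_ker_le [FiniteDimensional K V₁] [FiniteDimensional K V₂]
    (h : Module.finrank K V₁ = Module.finrank K V₂) {L : V₁ →ₗ[K] V₂}
    (hL : IsSimilitude T₁ T₂ c L) :
    Module.finrank K (LinearMap.ker T₂) ≤ Module.finrank K (LinearMap.ker T₁) := by
  have hker : LinearMap.ker ((LinearMap.ker T₂).mkQ ∘ₗ L) ≤ LinearMap.ker T₁ := fun w hw =>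
    hL.mem_ker_of_map_mem_ker ((Submodule.Quotient.mk_eq_zero _).1 hw)
  have hker' := Submodule.finrank_mono hker
  have hrank := LinearMap.finrank_range_add_finrank_ker ((LinearMap.ker T₂).mkQ ∘ₗ L)
  have hrange := Submodule.finrank_le (LinearMap.range ((LinearMap.ker T₂).mkQ ∘ₗ L))
  have hquot := Submodule.finrank_quotient_add_finrank (LinearMap.ker T₂)
  omega

lemma exists_linearEquiv_extending [FiniteDimensional K V₁] [FiniteDimensional K V₂]
    (h : Module.finrank K V₁ = Module.finrank K V₂) (hT₁ : IsSymmTrilinear T₁)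
    (hT₂ : IsSymmTrilinear T₂) {L : V₁ →ₗ[K] V₂} (hL : IsSimilitude T₁ T₂ c L)
    (E : LinearMap.ker T₁ ≃ₗ[K] LinearMap.ker T₂) :
    ∃ N : V₁ ≃ₗ[K] V₂, IsSimilitude T₁ T₂ c N ∧ ∀ w : LinearMap.ker T₁, N w = E w := by
  obtain ⟨p, hpW, hp⟩ := exists_projection_along (LinearMap.ker T₁)
  let q : V₁ →ₗ[K] LinearMap.ker T₁ := (LinearMap.id - p).codRestrict _ hp
  let N : V₁ →ₗ[K] V₂ := (LinearMap.ker T₂).subtype ∘ₗ E.toLinearMap ∘ₗ q + L ∘ₗ p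
  have hN : ∀ x, N x = E (q x) + L (p x) := fun x => rfl
  have hqW : ∀ w : LinearMap.ker T₁, q w = w := fun w =>
    Subtype.ext ((congrArg (w.1 - ·) (hpW w w.2)).trans (sub_zero _))
  have hinj : Function.Injective N := by
    rw [injective_iff_map_eq_zero]
    intro x hx
    rw [hN] at hx
    have hLp : L (p x) ∈ LinearMap.ker T₂ := by
      rw [eq_neg_of_add_eq_zero_right hx]
      exact neg_mem (E (q x)).2
    have hxW : x ∈ LinearMap.ker T₁ := by
      simpa only [sub_add_cancel] using add_mem (hp x) (hL.mem_ker_of_map_mem_ker hLp)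
    rw [hpW x hxW, map_zero, add_zero, hqW ⟨x, hxW⟩, ZeroMemClass.coe_eq_zero,
      E.map_eq_zero_iff] at hx
    exact congrArg Subtype.val hx
  refine ⟨N.linearEquivOfInjective hinj h, ⟨hL.ne_zero, fun x y z => ?_⟩, fun w => ?_⟩
  · have hNL : ∀ x, N x - L (p x) ∈ LinearMap.ker T₂ := fun x => by
      rw [hN, add_sub_cancel_right]
      exact (E (q x)).2
    exact (hT₂.apply_congr (hNL x) (hNL y) (hNL z)).trans ((hL.map_apply _ _ _).trans
      (congrArg (c * ·) (hT₁.apply_congr (hp x) (hp y) (hp z)).symm))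
  · refine (hN w).trans ?_
    rw [hqW, hpW w w.2, map_zero, add_zero]

end IsSimilitude

end TrilinearForm

section BilinForm

variable {K V V₁ V₂ : Type*} [Field K] [AddCommGroup V] [Module K V] [FiniteDimensional K V]
  [AddCommGroup V₁] [Module K V₁] [FiniteDimensional K V₁]
  [AddCommGroup V₂] [Module K V₂] [FiniteDimensional K V₂]

open Module QuadraticMap

lemma equivalent_weightedSumSquares_one (hsq : ∀ a : K, IsSquare a) [Invertible (2 : K)]
    (Q : QuadraticForm K V) (hQ : (associated (R := K) Q).SeparatingLeft) :
    Equivalent Q (weightedSumSquares K fun _ : Fin (finrank K V) => (1 : K)) := by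
  obtain ⟨w, hw⟩ := QuadraticForm.equivalent_weightedSumSquares_units_of_nondegenerate' Q hQ
  choose r hr using fun i => hsq (w i : K)
  have hr0 : ∀ i, r i ≠ 0 := fun i h => (w i).ne_zero (by rw [hr, h, zero_mul])
  exact hw.trans ⟨QuadraticForm.isometryEquivWeightedSumSquaresWeightedSumSquares
    (fun i => Units.mk0 (r i) (hr0 i)) fun i => by
      rw [Units.val_mk0, one_mul, pow_two, ← hr i]⟩

lemma exists_linearEquiv_isometry (h2 : (2 : K) ≠ 0) (hsq : ∀ a : K, IsSquare a)
    (h : finrank K V₁ = finrank K V₂) {B₁ : LinearMap.BilinForm K V₁}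
    {B₂ : LinearMap.BilinForm K V₂} (hs₁ : B₁.IsSymm) (hs₂ : B₂.IsSymm)
    (hn₁ : B₁.SeparatingLeft) (hn₂ : B₂.SeparatingLeft) :
    ∃ E : V₁ ≃ₗ[K] V₂, ∀ x y, B₂ (E x) (E y) = B₁ x y := by
  have : Invertible (2 : K) := invertibleOfNonzero h2
  have ha₁ : associated (R := K) B₁.toQuadraticMap = B₁ := associated_left_inverse K hs₁.eq
  have ha₂ : associated (R := K) B₂.toQuadraticMap = B₂ := associated_left_inverse K hs₂.eq
  have he₁ := equivalent_weightedSumSquares_one hsq B₁.toQuadraticMap (by rwa [ha₁])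
  have he₂ := equivalent_weightedSumSquares_one hsq B₂.toQuadraticMap (by rwa [ha₂])
  rw [h] at he₁
  obtain ⟨E⟩ := he₁.trans he₂.symm
  have hE : B₂.toQuadraticMap.comp E.toLinearEquiv.toLinearMap = B₁.toQuadraticMap :=
    QuadraticMap.ext E.map_app
  have hcomp := associated_comp K (Q := B₂.toQuadraticMap) E.toLinearEquiv.toLinearMap
  rw [hE, ha₁, ha₂] at hcomp
  exact ⟨E.toLinearEquiv, fun x y => (LinearMap.congr_fun₂ hcomp x y).symm⟩

end BilinForm

section SocleDegree

variable {σ K : Type*} [Field K] {Λ : Module.Dual K (MvPolynomial σ K)} {s : ℕ}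

/-- The functional `Λ` is supported in degrees at most `s` and its component of degree `s` is
nonzero; equivalently, the quotient by `apolarIdeal Λ` is local of socle degree `s`. -/
structure HasSocleDegree (Λ : Module.Dual K (MvPolynomial σ K)) (s : ℕ) : Prop where
  apply_eq_zero : ∀ p ∈ idealOfVars σ K ^ (s + 1), Λ p = 0
  exists_apply_ne_zero : ∃ p ∈ idealOfVars σ K ^ s, Λ p ≠ 0

namespace HasSocleDegree

lemma exists_apply_eq_one (hΛ : HasSocleDegree Λ s) : ∃ p ∈ idealOfVars σ K ^ s, Λ p = 1 := by
  obtain ⟨p, hp, hΛp⟩ := hΛ.exists_apply_ne_zero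
  exact ⟨(Λ p)⁻¹ • p, Submodule.smul_of_tower_mem _ _ hp, by
    rw [map_smul, smul_eq_mul, inv_mul_cancel₀ hΛp]⟩

lemma pow_le_apolarIdeal (hΛ : HasSocleDegree Λ s) :
    idealOfVars σ K ^ (s + 1) ≤ apolarIdeal Λ :=
  le_apolarIdeal hΛ.apply_eq_zero

lemma apply_mul_of_mem_pow (hΛ : HasSocleDegree Λ s) (u : MvPolynomial σ K) {p : MvPolynomial σ K}
    (hp : p ∈ idealOfVars σ K ^ s) : Λ (u * p) = constantCoeff u * Λ p := by
  have h := hΛ.apply_eq_zero _ (pow_succ' (idealOfVars σ K) s ▸ Ideal.mul_mem_mul (sub_C_mem u) hp)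
  rwa [sub_mul, map_sub, ← smul_eq_C_mul, map_smul, smul_eq_mul, sub_eq_zero] at h

lemma apolarIdeal_le (hΛ : HasSocleDegree Λ s) : apolarIdeal Λ ≤ idealOfVars σ K := by
  obtain ⟨p, hp, hΛp⟩ := hΛ.exists_apply_eq_one
  intro a ha
  rw [mem_idealOfVars_iff, ← mul_one (constantCoeff a), ← hΛp, ← hΛ.apply_mul_of_mem_pow a hp,
    mul_comm, ha]

lemma mem_apolarIdeal_of_mem_pow (hΛ : HasSocleDegree Λ s) {p : MvPolynomial σ K}
    (hp : p ∈ idealOfVars σ K ^ s) (h : Λ p = 0) : p ∈ apolarIdeal Λ :=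
  fun u => by rw [hΛ.apply_mul_of_mem_pow u hp, h, mul_zero]

end HasSocleDegree

end SocleDegree

section Forms

variable {σ K : Type*} [Fintype σ] [Field K]

/-- The pairing `(f, v) ↦ Λ (f * linearForm v)`. -/
noncomputable def linearPairing (Λ : Module.Dual K (MvPolynomial σ K)) :
    MvPolynomial σ K →ₗ[K] Module.Dual K (σ → K) :=
  ((LinearMap.mul K (MvPolynomial σ K)).compr₂ Λ).compl₂ linearForm

/-- The bilinear form given by the values of `Λ` on quadratic forms. -/
noncomputable def quadraticPart (Λ : Module.Dual K (MvPolynomial σ K)) :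
    LinearMap.BilinForm K (σ → K) :=
  linearPairing Λ ∘ₗ linearForm

/-- The trilinear form given by the values of `Λ` on cubic forms. -/
noncomputable def cubicPart (Λ : Module.Dual K (MvPolynomial σ K)) :
    (σ → K) →ₗ[K] (σ → K) →ₗ[K] (σ → K) →ₗ[K] K :=
  ((LinearMap.mul K (MvPolynomial σ K)).compl₁₂ linearForm linearForm).compr₂ (linearPairing Λ)

variable {Λ : Module.Dual K (MvPolynomial σ K)}

lemma quadraticPart_apply (u v : σ → K) :
    quadraticPart Λ u v = Λ (linearForm u * linearForm v) :=
  rfl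

lemma cubicPart_apply (u v w : σ → K) :
    cubicPart Λ u v w = Λ (linearForm u * linearForm v * linearForm w) :=
  rfl

lemma quadraticPart_isSymm : (quadraticPart Λ).IsSymm :=
  ⟨fun u v => by
    rw [quadraticPart_apply, quadraticPart_apply, mul_comm]⟩

lemma cubicPart_isSymmTrilinear : IsSymmTrilinear (cubicPart Λ) where
  swap_left u v w := by rw [cubicPart_apply, cubicPart_apply, mul_comm (linearForm u)]
  swap_right u v w := by rw [cubicPart_apply, cubicPart_apply, mul_right_comm]

lemma HasSocleDegree.apply_add_mul_add (hΛ : HasSocleDegree Λ 3) (u v : σ → K)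
    {a b : MvPolynomial σ K} (ha : a ∈ idealOfVars σ K ^ 2) (hb : b ∈ idealOfVars σ K ^ 2) :
    Λ ((linearForm u + a) * (linearForm v + b)) =
      quadraticPart Λ u v + (linearPairing Λ a v + linearPairing Λ b u) := by
  rw [show (linearForm u + a) * (linearForm v + b) = linearForm u * linearForm v +
    (a * linearForm v + b * linearForm u) + a * b by ring, map_add, map_add, map_add,
    hΛ.apply_eq_zero _ (mul_mem_pow_of_le ha hb le_rfl), add_zero]
  rfl

lemma HasSocleDegree.apply_mul_mul (hΛ : HasSocleDegree Λ 3) {u v w : σ → K}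
    {a b c : MvPolynomial σ K} (ha : a - linearForm u ∈ idealOfVars σ K ^ 2)
    (hb : b - linearForm v ∈ idealOfVars σ K ^ 2)
    (hc : c - linearForm w ∈ idealOfVars σ K ^ 2) : Λ (a * b * c) = cubicPart Λ u v w := by
  have hmem : ∀ {x : MvPolynomial σ K} {y : σ → K},
      x - linearForm y ∈ idealOfVars σ K ^ 2 → x ∈ idealOfVars σ K ^ 1 := fun h => by
    rw [pow_one]
    exact ((idealOfVars σ K).sub_mem_iff_left (linearForm_mem _)).1
      (Ideal.pow_le_self two_ne_zero h)
  have hab : a * b - linearForm u * linearForm v ∈ idealOfVars σ K ^ 3 :=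
    mul_sub_mul_mem_pow (k := 1) (l := 1) (by rw [pow_one]; exact linearForm_mem u) (hmem hb) ha hb
  rw [cubicPart_apply, ← sub_eq_zero, ← map_sub]
  exact hΛ.apply_eq_zero _
    (mul_sub_mul_mem_pow (k := 2) (l := 1) (linearForm_mul_mem u v) (hmem hc) hab hc)

lemma linearPairing_apply_eq_zero_of_mem_ker (hΛ : HasSocleDegree Λ 3) {w : σ → K}
    (hw : w ∈ LinearMap.ker (cubicPart Λ)) {f : MvPolynomial σ K}
    (hf : f ∈ idealOfVars σ K ^ 2) : linearPairing Λ f w = 0 := by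
  refine apply_eq_zero_of_forall_prod_linearForm ((linearPairing Λ).flip w) (k := 2)
    (fun p hp => hΛ.apply_eq_zero _ (Ideal.mul_mem_mul hp (linearForm_mem w))) (fun v => ?_) hf
  rw [Fin.prod_univ_two]
  refine (cubicPart_isSymmTrilinear.swap_right _ _ _).trans
    ((cubicPart_isSymmTrilinear.swap_left _ _ _).trans ?_)
  exact LinearMap.congr_fun₂ (LinearMap.mem_ker.1 hw) (v 0) (v 1)

lemma dualAnnihilator_ker_cubicPart_le :
    (LinearMap.ker (cubicPart Λ)).dualAnnihilator ≤
      ((idealOfVars σ K ^ 2).restrictScalars K).map (linearPairing Λ) := by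
  intro θ hθ
  let Φ : Subspace K (Module.Dual K (σ → K)) :=
    ((idealOfVars σ K ^ 2).restrictScalars K).map (linearPairing Λ)
  have hΦ : Φ.dualCoannihilator ≤ LinearMap.ker (cubicPart Λ) := fun w hw => by
    ext u v
    refine (cubicPart_isSymmTrilinear.swap_left _ _ _).trans
      ((cubicPart_isSymmTrilinear.swap_right _ _ _).trans ?_)
    exact (Submodule.mem_dualCoannihilator w).1 hw _ ⟨_, linearForm_mul_mem u v, rfl⟩
  exact (Subspace.dualCoannihilator_dualAnnihilator_eq (W := Φ)).le
    (Submodule.dualAnnihilator_anti hΦ hθ)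

lemma exists_linearMap_linearPairing_eq {U : Type*} [AddCommGroup U] [Module K U]
    (β : U →ₗ[K] Module.Dual K (σ → K))
    (hβ : ∀ u, ∀ w ∈ LinearMap.ker (cubicPart Λ), β u w = 0) :
    ∃ f : U →ₗ[K] MvPolynomial σ K,
      ∀ u, f u ∈ idealOfVars σ K ^ 2 ∧ linearPairing Λ (f u) = β u := by
  obtain ⟨f, hf⟩ := Module.projective_lifting_property
    ((linearPairing Λ).submoduleMap ((idealOfVars σ K ^ 2).restrictScalars K))
    (β.codRestrict _ fun u => dualAnnihilator_ker_cubicPart_le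
      ((Submodule.mem_dualAnnihilator _).2 (hβ u)))
    (LinearMap.submoduleMap_surjective _ _)
  exact ⟨Submodule.subtype _ ∘ₗ f, fun u =>
    ⟨(f u).2, congrArg Subtype.val (LinearMap.congr_fun hf u)⟩⟩

end Forms

section Isomorphism

variable {σ K : Type*} [Fintype σ] [Field K] {Λ₁ Λ₂ : Module.Dual K (MvPolynomial σ K)}

lemma exists_isSimilitude_of_algEquiv (hΛ₁ : HasSocleDegree Λ₁ 3) (hΛ₂ : HasSocleDegree Λ₂ 3)
    (Ψ : (MvPolynomial σ K ⧸ apolarIdeal Λ₁) ≃ₐ[K] MvPolynomial σ K ⧸ apolarIdeal Λ₂) :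
    ∃ c L, IsSimilitude (cubicPart Λ₁) (cubicPart Λ₂) c L := by
  obtain ⟨φ, hφ⟩ := exists_algHom_lift_quotient Ψ.toAlgHom
  have hmem : ∀ p, φ p ∈ apolarIdeal Λ₂ ↔ p ∈ apolarIdeal Λ₁ := fun p => by
    rw [← Ideal.Quotient.eq_zero_iff_mem, hφ, ← Ideal.Quotient.eq_zero_iff_mem]
    exact Ψ.map_eq_zero_iff
  have hlin : ∀ v, φ (linearForm v) ∈ idealOfVars σ K := fun v => by
    have hpow : φ (linearForm v) ^ 4 ∈ idealOfVars σ K := by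
      rw [← map_pow]
      exact hΛ₂.apolarIdeal_le ((hmem _).2
        (hΛ₁.pow_le_apolarIdeal (Ideal.pow_mem_pow (linearForm_mem v) 4)))
    rw [mem_idealOfVars_iff, map_pow] at hpow
    exact mem_idealOfVars_iff.2 (eq_zero_of_pow_eq_zero hpow)
  obtain ⟨s, hs, hΛs⟩ := hΛ₁.exists_apply_eq_one
  have hφΛ : ∀ p ∈ idealOfVars σ K ^ 3, Λ₂ (φ p) = Λ₂ (φ s) * Λ₁ p := fun p hp => by
    have hker : p - Λ₁ p • s ∈ apolarIdeal Λ₁ :=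
      hΛ₁.mem_apolarIdeal_of_mem_pow (sub_mem hp (Submodule.smul_of_tower_mem _ _ hs))
        (by rw [map_sub, map_smul, hΛs, smul_eq_mul, mul_one, sub_self])
    have hzero := apply_eq_zero_of_mem_apolarIdeal ((hmem _).2 hker)
    rwa [map_sub, map_sub, map_smul, map_smul, smul_eq_mul, sub_eq_zero, mul_comm] at hzero
  refine ⟨Λ₂ (φ s), linearPart ∘ₗ φ.toLinearMap ∘ₗ linearForm, fun hc => ?_, fun u v w => ?_⟩
  · have hs0 := (hmem s).1
      (hΛ₂.mem_apolarIdeal_of_mem_pow (map_mem_pow_of_forall_linearForm hlin hs) hc)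
    exact one_ne_zero (hΛs.symm.trans (apply_eq_zero_of_mem_apolarIdeal hs0))
  · have hcongr : ∀ v, φ (linearForm v) - linearForm (linearPart (φ (linearForm v))) ∈
        idealOfVars σ K ^ 2 := fun v => sub_linearForm_mem (hlin v)
    exact (hΛ₂.apply_mul_mul (hcongr u) (hcongr v) (hcongr w)).symm.trans
      (by rw [← map_mul, ← map_mul, hφΛ _ (linearForm_mul_mul_mem u v w), cubicPart_apply])

lemma finrank_ker_cubicPart_eq_of_algEquiv (hΛ₁ : HasSocleDegree Λ₁ 3) (hΛ₂ : HasSocleDegree Λ₂ 3)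
    (Ψ : (MvPolynomial σ K ⧸ apolarIdeal Λ₁) ≃ₐ[K] MvPolynomial σ K ⧸ apolarIdeal Λ₂) :
    Module.finrank K (LinearMap.ker (cubicPart Λ₁)) =
      Module.finrank K (LinearMap.ker (cubicPart Λ₂)) := by
  obtain ⟨_, _, h₁₂⟩ := exists_isSimilitude_of_algEquiv hΛ₁ hΛ₂ Ψ
  obtain ⟨_, _, h₂₁⟩ := exists_isSimilitude_of_algEquiv hΛ₂ hΛ₁ Ψ.symm
  exact le_antisymm (h₂₁.finrank_ker_le rfl) (h₁₂.finrank_ker_le rfl)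

lemma exists_linearMap_lift_of_isSimilitude (h2 : (2 : K) ≠ 0) (hΛ₂ : HasSocleDegree Λ₂ 3) {c : K}
    {N : (σ → K) ≃ₗ[K] σ → K} (hN : IsSimilitude (cubicPart Λ₁) (cubicPart Λ₂) c N.toLinearMap)
    (hq : ∀ u ∈ LinearMap.ker (cubicPart Λ₁), ∀ v ∈ LinearMap.ker (cubicPart Λ₁),
      quadraticPart Λ₂ (N u) (N v) = c * quadraticPart Λ₁ u v) :
    ∃ g : (σ → K) →ₗ[K] MvPolynomial σ K,
      (∀ v, g v - linearForm (N v) ∈ idealOfVars σ K ^ 2) ∧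
      (∀ u, Λ₂ (g u) = c * Λ₁ (linearForm u)) ∧
      ∀ u v, Λ₂ (g u * g v) = c * quadraticPart Λ₁ u v := by
  let d : LinearMap.BilinForm K (σ → K) :=
    c • quadraticPart Λ₁ - (quadraticPart Λ₂).compl₁₂ N.toLinearMap N.toLinearMap
  have hd : ∀ u v, d u v = c * quadraticPart Λ₁ u v - quadraticPart Λ₂ (N u) (N v) :=
    fun _ _ => rfl
  obtain ⟨B, hBW, hB⟩ := exists_bilin_add_swap_eq h2 (W := LinearMap.ker (cubicPart Λ₁)) (d := d)
    (fun u v => by rw [hd, hd, quadraticPart_isSymm.eq u, quadraticPart_isSymm.eq (N u)])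
    (fun u hu v hv => by rw [hd, hq u hu v hv, sub_self])
  obtain ⟨f, hf⟩ := exists_linearMap_linearPairing_eq (Λ := Λ₂) (B.compl₂ N.symm.toLinearMap)
    fun u w hw => hBW u _ (hN.mem_ker_of_map_mem_ker (by
      rwa [LinearEquiv.coe_coe, LinearEquiv.coe_coe, N.apply_symm_apply]))
  have hfN : ∀ u v, linearPairing Λ₂ (f u) (N v) = B u v := fun u v => by
    rw [(hf u).2, LinearMap.compl₂_apply, LinearEquiv.coe_coe, N.symm_apply_apply]
  obtain ⟨s, hs, hΛs⟩ := hΛ₂.exists_apply_eq_one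
  -- The socle term `t u • s` corrects the values on linear forms and is invisible on products.
  let t : Module.Dual K (σ → K) :=
    c • Λ₁ ∘ₗ linearForm - Λ₂ ∘ₗ linearForm ∘ₗ N.toLinearMap - Λ₂ ∘ₗ f
  let a : (σ → K) →ₗ[K] MvPolynomial σ K := f + t.smulRight s
  have hs2 : s ∈ idealOfVars σ K ^ 2 := Ideal.pow_le_pow_right (by omega) hs
  have ha : ∀ u, a u ∈ idealOfVars σ K ^ 2 := fun u =>
    add_mem (hf u).1 (Submodule.smul_of_tower_mem _ (t u) hs2)
  have haN : ∀ u v, linearPairing Λ₂ (a u) (N v) = B u v := fun u v => by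
    have hsv : linearPairing Λ₂ s (N v) = 0 :=
      hΛ₂.apply_eq_zero _ (Ideal.mul_mem_mul hs (linearForm_mem (N v)))
    rw [LinearMap.add_apply, LinearMap.smulRight_apply, map_add, map_smul, LinearMap.add_apply,
      LinearMap.smul_apply, hsv, smul_zero, add_zero, hfN]
  refine ⟨linearForm ∘ₗ N.toLinearMap + a, fun v => ?_, fun u => ?_, fun u v => ?_⟩
  · simpa using ha v
  · simp [a, t, hΛs]
  · refine (hΛ₂.apply_add_mul_add (N u) (N v) (ha u) (ha v)).trans ?_
    rw [haN, haN, hB, hd, add_sub_cancel]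

lemma apply_eq_zero_of_mem_idealOfVars {Θ : Module.Dual K (MvPolynomial σ K)}
    (h₁ : ∀ u, Θ (linearForm u) = 0) (h₂ : ∀ u v, Θ (linearForm u * linearForm v) = 0)
    (h₃ : ∀ u v w, Θ (linearForm u * linearForm v * linearForm w) = 0)
    (h₄ : ∀ p ∈ idealOfVars σ K ^ 4, Θ p = 0) {p : MvPolynomial σ K}
    (hp : p ∈ idealOfVars σ K) : Θ p = 0 := by
  have h₃' : ∀ p ∈ idealOfVars σ K ^ 3, Θ p = 0 := fun p =>
    apply_eq_zero_of_forall_prod_linearForm Θ h₄ fun v => by rw [Fin.prod_univ_three, h₃]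
  have h₂' : ∀ p ∈ idealOfVars σ K ^ 2, Θ p = 0 := fun p =>
    apply_eq_zero_of_forall_prod_linearForm Θ h₃' fun v => by rw [Fin.prod_univ_two, h₂]
  exact apply_eq_zero_of_forall_prod_linearForm Θ h₂' (k := 1)
    (fun v => by rw [Fin.prod_univ_one, h₁]) (by rwa [pow_one])

lemma exists_sub_map_mem_pow {φ : MvPolynomial σ K →ₐ[K] MvPolynomial σ K}
    {N : (σ → K) ≃ₗ[K] σ → K}
    (hφ : ∀ v, φ (linearForm v) - linearForm (N v) ∈ idealOfVars σ K ^ 2) (k : ℕ)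
    (p : MvPolynomial σ K) : ∃ q, p - φ q ∈ idealOfVars σ K ^ k := by
  have h₀ : ∀ a, ∃ b ∈ φ.range, a - b ∈ idealOfVars σ K := fun a =>
    ⟨_, φ.range.algebraMap_mem (constantCoeff a), sub_C_mem a⟩
  have h₁ : ∀ a ∈ idealOfVars σ K, ∃ b ∈ φ.range, a - b ∈ idealOfVars σ K ^ 2 := fun a ha => by
    refine ⟨_, ⟨linearForm (N.symm (linearPart a)), rfl⟩, ?_⟩
    have h := sub_mem (sub_linearForm_mem ha) (hφ (N.symm (linearPart a)))
    rwa [N.apply_symm_apply, sub_sub_sub_cancel_right] at h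
  obtain ⟨_, ⟨q, rfl⟩, hq⟩ := exists_mem_sub_mem_pow h₀ h₁ k p
  exact ⟨q, hq⟩

lemma nonempty_algEquiv_of_isSimilitude (h2 : (2 : K) ≠ 0) (hΛ₁ : HasSocleDegree Λ₁ 3)
    (hΛ₂ : HasSocleDegree Λ₂ 3) {c : K} {N : (σ → K) ≃ₗ[K] σ → K}
    (hN : IsSimilitude (cubicPart Λ₁) (cubicPart Λ₂) c N.toLinearMap)
    (hq : ∀ u ∈ LinearMap.ker (cubicPart Λ₁), ∀ v ∈ LinearMap.ker (cubicPart Λ₁),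
      quadraticPart Λ₂ (N u) (N v) = c * quadraticPart Λ₁ u v) :
    Nonempty ((MvPolynomial σ K ⧸ apolarIdeal Λ₁) ≃ₐ[K] MvPolynomial σ K ⧸ apolarIdeal Λ₂) := by
  obtain ⟨g, hgN, hg₁, hg₂⟩ := exists_linearMap_lift_of_isSimilitude h2 hΛ₂ hN hq
  obtain ⟨φ, hφ⟩ := exists_algHom_linearForm_eq g
  simp only [← hφ] at hgN hg₁ hg₂
  have hlin : ∀ v, φ (linearForm v) ∈ idealOfVars σ K := fun v =>
    ((idealOfVars σ K).sub_mem_iff_left (linearForm_mem _)).1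
      (Ideal.pow_le_self two_ne_zero (hgN v))
  have hg₃ : ∀ u v w, Λ₂ (φ (linearForm u * linearForm v * linearForm w)) =
      c * cubicPart Λ₁ u v w := fun u v w => by
    rw [map_mul φ, map_mul φ, hΛ₂.apply_mul_mul (hgN u) (hgN v) (hgN w)]
    exact hN.map_apply u v w
  have hg₄ : ∀ p ∈ idealOfVars σ K ^ 4, Λ₂ (φ p) = c * Λ₁ p := fun p hp => by
    rw [hΛ₁.apply_eq_zero p hp, mul_zero]
    exact hΛ₂.apply_eq_zero _ (map_mem_pow_of_forall_linearForm hlin hp)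
  have hΛφ : ∀ p ∈ idealOfVars σ K, (Λ₂ ∘ₗ φ.toLinearMap) p = c * Λ₁ p := fun p hp =>
    sub_eq_zero.1 <| apply_eq_zero_of_mem_idealOfVars (Θ := Λ₂ ∘ₗ φ.toLinearMap - c • Λ₁)
      (fun u => sub_eq_zero.2 (hg₁ u))
      (fun u v => sub_eq_zero.2 ((congrArg Λ₂ (map_mul φ _ _)).trans (hg₂ u v)))
      (fun u v w => sub_eq_zero.2 (hg₃ u v w)) (fun q hq => sub_eq_zero.2 (hg₄ q hq)) hp
  have hφ₄ : ∀ p, ∃ q, p - φ q ∈ apolarIdeal Λ₂ := fun p =>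
    (exists_sub_map_mem_pow hgN 4 p).imp fun _ h => hΛ₂.pow_le_apolarIdeal h
  have hcomap := comap_apolarIdeal Λ₂ φ hφ₄
  have hle : apolarIdeal (Λ₂ ∘ₗ φ.toLinearMap) ≤ idealOfVars σ K := fun p hp => by
    have hp₂ : φ p ∈ idealOfVars σ K := hΛ₂.apolarIdeal_le (hcomap.ge hp)
    have hpC : φ (p - C (constantCoeff p)) ∈ idealOfVars σ K := by
      simpa only [pow_one] using
        map_mem_pow_of_forall_linearForm hlin (k := 1) (by simpa only [pow_one] using sub_C_mem p)
    rw [map_sub, (idealOfVars σ K).sub_mem_iff_right hp₂, ← algebraMap_eq, φ.commutes,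
      algebraMap_eq, mem_idealOfVars_iff, constantCoeff_C] at hpC
    exact mem_idealOfVars_iff.2 hpC
  exact nonempty_algEquiv_quotient_of_comap_eq φ
    (hcomap.trans (apolarIdeal_eq_of_apply_eq_mul hN.ne_zero hΛ₁.apolarIdeal_le hle hΛφ).symm) hφ₄

theorem nonempty_algEquiv_of_cubicPart_eq (h2 : (2 : K) ≠ 0) (hΛ₁ : HasSocleDegree Λ₁ 3)
    (hΛ₂ : HasSocleDegree Λ₂ 3) {Λ₁' Λ₂' : Module.Dual K (MvPolynomial σ K)}
    (hΛ₁' : HasSocleDegree Λ₁' 3) (hΛ₂' : HasSocleDegree Λ₂' 3)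
    (h₁ : cubicPart Λ₁' = cubicPart Λ₁) (h₂ : cubicPart Λ₂' = cubicPart Λ₂)
    (hE : ∀ c : K, c ≠ 0 → Module.finrank K (LinearMap.ker (cubicPart Λ₁)) =
      Module.finrank K (LinearMap.ker (cubicPart Λ₂)) →
      ∃ E : LinearMap.ker (cubicPart Λ₁) ≃ₗ[K] LinearMap.ker (cubicPart Λ₂),
        ∀ x y, quadraticPart Λ₂ (E x) (E y) = c * quadraticPart Λ₁ x y)
    (Ψ : (MvPolynomial σ K ⧸ apolarIdeal Λ₁') ≃ₐ[K] MvPolynomial σ K ⧸ apolarIdeal Λ₂') :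
    Nonempty ((MvPolynomial σ K ⧸ apolarIdeal Λ₁) ≃ₐ[K] MvPolynomial σ K ⧸ apolarIdeal Λ₂) := by
  obtain ⟨c, L, hL⟩ := exists_isSimilitude_of_algEquiv hΛ₁' hΛ₂' Ψ
  have hrank := finrank_ker_cubicPart_eq_of_algEquiv hΛ₁' hΛ₂' Ψ
  rw [h₁, h₂] at hL hrank
  obtain ⟨E, hE⟩ := hE c hL.ne_zero hrank
  obtain ⟨N, hN, hNE⟩ := hL.exists_linearEquiv_extending rfl cubicPart_isSymmTrilinear
    cubicPart_isSymmTrilinear E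
  exact nonempty_algEquiv_of_isSimilitude h2 hΛ₁ hΛ₂ hN fun u hu v hv => by
    rw [hNE ⟨u, hu⟩, hNE ⟨v, hv⟩, hE]

end Isomorphism

section Nondegenerate

variable {σ K : Type*} [Fintype σ] [Field K] {Λ Λ₁ Λ₂ : Module.Dual K (MvPolynomial σ K)}

lemma separatingLeft_restrict_quadraticPart (hΛ : HasSocleDegree Λ 3)
    (hlin : apolarIdeal Λ ≤ idealOfVars σ K ^ 2) :
    ((quadraticPart Λ).restrict (LinearMap.ker (cubicPart Λ))).SeparatingLeft := by
  rintro ⟨w, hw⟩ hwW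
  obtain ⟨f, hf, hfw⟩ := dualAnnihilator_ker_cubicPart_le
    ((Submodule.mem_dualAnnihilator (quadraticPart Λ w)).2 fun v hv => hwW ⟨v, hv⟩)
  obtain ⟨s, hs, hΛs⟩ := hΛ.exists_apply_eq_one
  let p : MvPolynomial σ K := linearForm w - f - Λ (linearForm w - f) • s
  have hsp : Λ (linearForm w - f) • s ∈ idealOfVars σ K ^ 3 := Submodule.smul_of_tower_mem _ _ hs
  have hp₀ : Λ p = 0 := by rw [map_sub, map_smul, hΛs, smul_eq_mul, mul_one, sub_self]
  have hp₁ : ∀ v, Λ (linearForm v * p) = 0 := fun v => by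
    rw [mul_comm, sub_mul, map_sub, hΛ.apply_eq_zero _ (Ideal.mul_mem_mul hsp (linearForm_mem v)),
      sub_zero]
    exact (LinearMap.congr_fun (map_sub (linearPairing Λ) _ f) v).trans
      (sub_eq_zero.2 (LinearMap.congr_fun hfw v).symm)
  have hp₂ : ∀ q ∈ idealOfVars σ K ^ 2, Λ (q * p) = 0 := fun q hq => by
    rw [mul_sub, mul_sub, map_sub, map_sub, hΛ.apply_eq_zero _ (mul_mem_pow_of_le hq hf le_rfl),
      hΛ.apply_eq_zero _ (mul_mem_pow_of_le hq hsp (by omega)), sub_zero, sub_zero]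
    exact linearPairing_apply_eq_zero_of_mem_ker hΛ hw hq
  have hp : p ∈ apolarIdeal Λ := fun u => by
    let Θ : Module.Dual K (MvPolynomial σ K) := Λ ∘ₗ LinearMap.mulRight K p
    have hΘ : ∀ q ∈ idealOfVars σ K ^ 1, Θ q = 0 := fun q =>
      apply_eq_zero_of_forall_prod_linearForm Θ hp₂ fun v => by
        rw [Fin.prod_univ_one]; exact hp₁ (v 0)
    refine apply_eq_zero_of_forall_prod_linearForm Θ hΘ (k := 0) (fun v => ?_) (by simp)
    rw [Fin.prod_univ_zero]
    exact (congrArg Λ (one_mul p)).trans hp₀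
  have hlinp := linearPart_eq_zero (hlin hp)
  rw [map_sub, map_sub, linearPart_linearForm, linearPart_eq_zero hf,
    linearPart_eq_zero (Ideal.pow_le_pow_right (by omega) hsp), sub_zero, sub_zero] at hlinp
  exact Subtype.ext hlinp

lemma exists_linearEquiv_ker_cubicPart_isometry (h2 : (2 : K) ≠ 0) (hsq : ∀ a : K, IsSquare a)
    (hΛ₁ : HasSocleDegree Λ₁ 3) (hΛ₂ : HasSocleDegree Λ₂ 3)
    (hlin₁ : apolarIdeal Λ₁ ≤ idealOfVars σ K ^ 2) (hlin₂ : apolarIdeal Λ₂ ≤ idealOfVars σ K ^ 2)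
    (hrank : Module.finrank K (LinearMap.ker (cubicPart Λ₁)) =
      Module.finrank K (LinearMap.ker (cubicPart Λ₂))) {c : K} (hc : c ≠ 0) :
    ∃ E : LinearMap.ker (cubicPart Λ₁) ≃ₗ[K] LinearMap.ker (cubicPart Λ₂),
      ∀ x y, quadraticPart Λ₂ (E x) (E y) = c * quadraticPart Λ₁ x y := by
  have hsymm : ∀ Λ : Module.Dual K (MvPolynomial σ K),
      ((quadraticPart Λ).restrict (LinearMap.ker (cubicPart Λ))).IsSymm := fun _ =>
    ⟨fun x y => quadraticPart_isSymm.eq x.1 y.1⟩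
  refine exists_linearEquiv_isometry h2 hsq hrank
    (B₁ := c • (quadraticPart Λ₁).restrict (LinearMap.ker (cubicPart Λ₁)))
    ⟨fun x y => congrArg (c * ·) ((hsymm Λ₁).eq x y)⟩ (hsymm Λ₂) (fun x hx => ?_)
    (separatingLeft_restrict_quadraticPart hΛ₂ hlin₂)
  exact separatingLeft_restrict_quadraticPart hΛ₁ hlin₁ x fun y =>
    (mul_eq_zero.1 (hx y)).resolve_left hc

end Nondegenerate

section Contraction

variable {K : Type*} [Field K] {m : ℕ}

open scoped Nat

lemma coeff_contract (f : MvPowerSeries (Fin m) K) (F : MvPolynomial (Fin m) K) (γ : Fin m →₀ ℕ) :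
    coeff γ (contract f F) = ∑ β ∈ F.support, if γ ≤ β then
      coeff β F * (MvPowerSeries.coeff (β - γ) f *
        ∏ i, ((β i).descFactorial (β i - γ i) : K)) else 0 := by
  rw [contract, Module.Basis.constr_apply, Finsupp.sum, coeff_sum]
  refine Finset.sum_congr rfl fun β _ => ?_
  simp only [coeff_smul, coeff_sum, coeff_monomial, smul_eq_mul, mul_ite, mul_one, mul_zero]
  split_ifs with hγ
  · rw [Finset.sum_eq_single_of_mem (β - γ) (Finset.mem_Iic.2 tsub_le_self) fun α hα hne =>
      if_neg fun h : β - α = γ => hne (h ▸ (tsub_tsub_cancel_of_le (Finset.mem_Iic.1 hα)).symm),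
      if_pos (tsub_tsub_cancel_of_le hγ)]
    rfl
  · rw [Finset.sum_eq_zero fun α _ => if_neg fun h : β - α = γ => hγ (h ▸ tsub_le_self), mul_zero]

/-- The pairing `(F, f) ↦ (f ∘ F)(0)` between polynomials and power series. -/
noncomputable def contractionPairing :
    MvPolynomial (Fin m) K →ₗ[K] MvPowerSeries (Fin m) K →ₗ[K] K :=
  (basisMonomials (Fin m) K).constr K fun β => (∏ i, ((β i)! : K)) • MvPowerSeries.coeff β

lemma contractionPairing_apply (F : MvPolynomial (Fin m) K) (f : MvPowerSeries (Fin m) K) :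
    contractionPairing F f =
      ∑ β ∈ F.support, coeff β F * ((∏ i, ((β i)! : K)) * MvPowerSeries.coeff β f) := by
  rw [contractionPairing, Module.Basis.constr_apply, Finsupp.sum, LinearMap.sum_apply]
  rfl

lemma coeff_contract_mul_prod_factorial (f : MvPowerSeries (Fin m) K) (F : MvPolynomial (Fin m) K)
    (γ : Fin m →₀ ℕ) : coeff γ (contract f F) * ∏ i, ((γ i)! : K) =
      contractionPairing F (MvPowerSeries.monomial γ 1 * f) := by
  rw [coeff_contract, contractionPairing_apply, Finset.sum_mul]
  refine Finset.sum_congr rfl fun β _ => ?_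
  rw [MvPowerSeries.coeff_monomial_mul]
  split_ifs with hγ
  · have hfact : (∏ i, ((β i)! : K)) =
        (∏ i, ((γ i)! : K)) * ∏ i, ((β i).descFactorial (β i - γ i) : K) := by
      rw [← Finset.prod_mul_distrib]
      refine Finset.prod_congr rfl fun i _ => ?_
      rw [← Nat.factorial_mul_descFactorial (Nat.sub_le (β i) (γ i)), Nat.sub_sub_self (hγ i),
        Nat.cast_mul]
    rw [hfact]
    ring
  · rw [zero_mul, mul_zero, mul_zero]

lemma contractionPairing_mul_eq_zero {F : MvPolynomial (Fin m) K} {f : MvPowerSeries (Fin m) K}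
    (hf : ∀ β : Fin m →₀ ℕ, β.degree ≤ F.totalDegree → MvPowerSeries.coeff β f = 0)
    (u : MvPowerSeries (Fin m) K) : contractionPairing F (u * f) = 0 := by
  classical
  rw [contractionPairing_apply]
  refine Finset.sum_eq_zero fun β hβ => ?_
  rw [MvPowerSeries.coeff_mul, Finset.sum_eq_zero, mul_zero, mul_zero]
  intro α hα
  have hle : α.2 ≤ β := Finset.HasAntidiagonal.antidiagonal.snd_le hα
  rw [hf α.2 ((Finsupp.degree_mono hle).trans (le_totalDegree hβ)), mul_zero]

lemma prod_factorial_ne_zero {d : ℕ} (hd : (d ! : K) ≠ 0) {β : Fin m →₀ ℕ} (hβ : β.degree ≤ d) :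
    (∏ i, ((β i)! : K)) ≠ 0 := by
  have hdvd : (∏ i, (β i)!) ∣ d ! := by
    rw [Finsupp.degree_eq_sum] at hβ
    exact (Nat.prod_factorial_dvd_factorial_sum _ _).trans (Nat.factorial_dvd_factorial hβ)
  exact_mod_cast ne_zero_of_dvd_ne_zero hd (Nat.cast_dvd_cast (α := K) hdvd)

lemma annR_eq_apolarIdeal {F : MvPolynomial (Fin m) K} (hF : (F.totalDegree ! : K) ≠ 0) :
    annR F = apolarIdeal (contractionPairing F) := by
  ext f
  refine ⟨fun hf u => ?_, fun hf u => ext _ _ fun γ => ?_⟩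
  · have h := coeff_contract_mul_prod_factorial (u * f) F 0
    rw [hf u, coeff_zero, zero_mul, MvPowerSeries.monomial_zero_one, one_mul] at h
    exact h.symm
  rcases le_or_gt γ.degree F.totalDegree with hγ | hγ
  · have h := coeff_contract_mul_prod_factorial (u * f) F γ
    rw [← mul_assoc, hf, mul_eq_zero] at h
    exact h.resolve_right (prod_factorial_ne_zero hF hγ)
  · rw [coeff_contract, coeff_zero]
    exact Finset.sum_eq_zero fun β hβ => if_neg fun h =>
      hγ.not_ge ((Finsupp.degree_mono h).trans (le_totalDegree hβ))

/-- The functional `p ↦ (p ∘ F)(0)` on polynomials: the restriction of `contractionPairing F`. -/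
noncomputable def dualFunctional :
    MvPolynomial (Fin m) K →ₗ[K] Module.Dual K (MvPolynomial (Fin m) K) :=
  contractionPairing.compl₂ (coeToMvPowerSeries.algHom K).toLinearMap

lemma dualFunctional_apply (F p : MvPolynomial (Fin m) K) :
    dualFunctional F p = ∑ β ∈ F.support, coeff β F * ((∏ i, ((β i)! : K)) * coeff β p) :=
  contractionPairing_apply F _

end Contraction

section DualFunctional

variable {K : Type*} [Field K] {m : ℕ} {F : MvPolynomial (Fin m) K}

open scoped Nat

lemma sub_truncTotal_mem_annR (hF : (F.totalDegree ! : K) ≠ 0) (f : MvPowerSeries (Fin m) K) :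
    f - (MvPowerSeries.truncTotal (F.totalDegree + 1) f : MvPolynomial (Fin m) K) ∈ annR F := by
  rw [annR_eq_apolarIdeal hF]
  refine contractionPairing_mul_eq_zero fun β hβ => ?_
  rw [map_sub, coeff_coe, MvPowerSeries.coeff_truncTotal _ (Nat.lt_succ_of_le hβ), sub_self]

lemma exists_sub_coe_mem_annR (hF : (F.totalDegree ! : K) ≠ 0) (f : MvPowerSeries (Fin m) K) :
    ∃ p : MvPolynomial (Fin m) K, f - coeToMvPowerSeries.algHom K p ∈ annR F :=
  ⟨_, sub_truncTotal_mem_annR hF f⟩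

lemma comap_annR (hF : (F.totalDegree ! : K) ≠ 0) :
    (annR F).comap (coeToMvPowerSeries.algHom K) = apolarIdeal (dualFunctional F) := by
  have h := exists_sub_coe_mem_annR hF
  rw [annR_eq_apolarIdeal hF] at h ⊢
  exact comap_apolarIdeal _ _ h

lemma nonempty_algEquiv_quotient_annR (hF : (F.totalDegree ! : K) ≠ 0) :
    Nonempty ((MvPolynomial (Fin m) K ⧸ apolarIdeal (dualFunctional F)) ≃ₐ[K]
      MvPowerSeries (Fin m) K ⧸ annR F) :=
  nonempty_algEquiv_quotient_of_comap_eq _ (comap_annR hF) (exists_sub_coe_mem_annR hF)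

lemma dualFunctional_eq_zero_of_mem_pow {p : MvPolynomial (Fin m) K}
    (hp : p ∈ idealOfVars (Fin m) K ^ (F.totalDegree + 1)) : dualFunctional F p = 0 := by
  rw [dualFunctional_apply]
  refine Finset.sum_eq_zero fun β hβ => ?_
  rw [(mem_pow_idealOfVars_iff' _ _).1 hp β (Nat.lt_succ_of_le (le_totalDegree hβ)), mul_zero,
    mul_zero]

lemma hasSocleDegree_dualFunctional (hF : (F.totalDegree ! : K) ≠ 0) (hF0 : F ≠ 0) :
    HasSocleDegree (dualFunctional F) F.totalDegree where
  apply_eq_zero _ := dualFunctional_eq_zero_of_mem_pow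
  exists_apply_ne_zero := by
    classical
    obtain ⟨β, hβ, hdeg⟩ :=
      Finset.exists_mem_eq_sup F.support (support_nonempty.2 hF0) Finsupp.degree
    refine ⟨monomial β 1, (monomial_mem_pow_idealOfVars_iff _ _ one_ne_zero).2 hdeg.le, ?_⟩
    rw [dualFunctional_apply, Finset.sum_eq_single_of_mem β hβ fun γ _ hγ => by
      rw [coeff_monomial, if_neg hγ.symm, mul_zero, mul_zero], coeff_monomial, if_pos rfl, mul_one]
    exact mul_ne_zero (mem_support_iff.1 hβ) (prod_factorial_ne_zero hF (le_totalDegree hβ))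

lemma cubicPart_dualFunctional_eq {F₃ : MvPolynomial (Fin m) K} (h : (F - F₃).totalDegree ≤ 2) :
    cubicPart (dualFunctional F) = cubicPart (dualFunctional F₃) := by
  refine LinearMap.ext₂ fun u v => LinearMap.ext fun w => ?_
  rw [cubicPart_apply, cubicPart_apply, ← sub_eq_zero, ← LinearMap.sub_apply, ← map_sub]
  exact dualFunctional_eq_zero_of_mem_pow
    (Ideal.pow_le_pow_right (by omega) (linearForm_mul_mul_mem u v w))

lemma quadraticPart_dualFunctional_eq_zero (hF : F.IsHomogeneous 3) :
    quadraticPart (dualFunctional F) = 0 := by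
  have hlin : ∀ v : Fin m → K, (linearForm v).IsHomogeneous 1 := fun v =>
    IsHomogeneous.sum _ _ _ fun i _ =>
      (homogeneousSubmodule (Fin m) K 1).smul_mem (v i) (isHomogeneous_X K i)
  refine LinearMap.ext₂ fun u v => ?_
  rw [quadraticPart_apply, dualFunctional_apply]
  refine Finset.sum_eq_zero fun β hβ => ?_
  have hdeg : β.degree = 3 := by
    rw [Finsupp.degree_eq_weight_one]; exact hF (mem_support_iff.1 hβ)
  rw [((hlin u).mul (hlin v)).coeff_eq_zero (by omega), mul_zero, mul_zero]

end DualFunctional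

section HilbertFunction

variable {σ K W : Type*} [Fintype σ] [Field K] [AddCommGroup W] [Module K W] {m : ℕ}

open scoped Nat

lemma ker_le_pow_two_of_card_lt_finrank (π : MvPolynomial σ K →ₗ[K] W)
    (hπ : Function.Surjective π) (hker : ∀ p ∈ idealOfVars σ K ^ 2, π p = 0)
    (hW : Fintype.card σ < Module.finrank K W) {p : MvPolynomial σ K} (hp : π p = 0) :
    p ∈ idealOfVars σ K ^ 2 := by
  let θ : K × (σ → K) →ₗ[K] W := π ∘ₗ (Algebra.linearMap K (MvPolynomial σ K)).coprod linearForm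
  have hθ : ∀ c v, θ (c, v) = π (C c + linearForm v) := fun _ _ => rfl
  have hmem : ∀ q : MvPolynomial σ K,
      ∃ v, q - (C (constantCoeff q) + linearForm v) ∈ idealOfVars σ K ^ 2 := fun q =>
    ⟨_, by rw [← sub_sub]; exact sub_linearForm_mem (sub_C_mem q)⟩
  have hsurj : Function.Surjective θ := fun w => by
    obtain ⟨q, rfl⟩ := hπ w
    obtain ⟨v, hv⟩ := hmem q
    have hqv := hker _ hv
    rw [map_sub, sub_eq_zero] at hqv
    exact ⟨(constantCoeff q, v), (hθ _ _).trans hqv.symm⟩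
  have hdim : Module.finrank K (K × (σ → K)) = Fintype.card σ + 1 := by
    rw [Module.finrank_prod, Module.finrank_self, Module.finrank_fintype_fun_eq_card, add_comm]
  have : FiniteDimensional K W := Module.Finite.of_surjective θ hsurj
  have hle : Module.finrank K W ≤ Module.finrank K (K × (σ → K)) :=
    LinearMap.finrank_le_finrank_of_surjective hsurj
  have heq : Module.finrank K (K × (σ → K)) = Module.finrank K W := by omega
  have hinj : Function.Injective θ :=
    (LinearMap.injective_iff_surjective_of_finrank_eq_finrank heq).2 hsurj
  obtain ⟨v, hv⟩ := hmem p
  have hpv := hker _ hv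
  rw [map_sub, hp, zero_sub, neg_eq_zero, ← hθ, θ.map_eq_zero_iff hinj, Prod.mk_eq_zero] at hpv
  rwa [hpv.1, hpv.2, map_zero, map_zero, add_zero, sub_zero] at hv

lemma coe_mem_mxR_pow {k : ℕ} {p : MvPolynomial (Fin m) K} (hp : p ∈ idealOfVars (Fin m) K ^ k) :
    coeToMvPowerSeries.algHom K p ∈ mxR K m ^ k :=
  map_mem_pow_of_forall_linearForm
    (fun v => mem_idealOfVars_iff.1 (linearForm_mem (σ := Fin m) (K := K) v)) hp

variable {F : MvPolynomial (Fin m) K}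

lemma finrank_quotient_mxR : Module.finrank K (MvPowerSeries (Fin m) K ⧸ mxR K m) = 1 := by
  let ε : MvPowerSeries (Fin m) K →ₐ[K] K :=
    { MvPowerSeries.constantCoeff with commutes' := fun c => MvPowerSeries.constantCoeff_C c }
  have hε : Function.Surjective ε := fun c => ⟨MvPowerSeries.C c, MvPowerSeries.constantCoeff_C c⟩
  exact (Ideal.quotientKerAlgEquivOfSurjective hε).toLinearEquiv.finrank_eq.trans
    (Module.finrank_self K)

lemma annR_le_mxR (hF : (F.totalDegree ! : K) ≠ 0) (hF0 : F ≠ 0) : annR F ≤ mxR K m := by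
  intro f hf
  let p : MvPolynomial (Fin m) K := MvPowerSeries.truncTotal (F.totalDegree + 1) f
  have hp : p ∈ apolarIdeal (dualFunctional F) := (comap_annR hF).le
    (((annR F).sub_mem_iff_right hf).1 (sub_truncTotal_mem_annR hF f))
  have hp₀ := mem_idealOfVars_iff.1 ((hasSocleDegree_dualFunctional hF hF0).apolarIdeal_le hp)
  rwa [MvPowerSeries.constantCoeff_truncTotal_eq_ite, if_pos (Nat.succ_pos _)] at hp₀

lemma apolarIdeal_le_pow_two_of_hilbQ_one (hF : (F.totalDegree ! : K) ≠ 0) (hF0 : F ≠ 0)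
    (h : hilbQ (annR F) 1 = m) :
    apolarIdeal (dualFunctional F) ≤ idealOfVars (Fin m) K ^ 2 := by
  rcases m.eq_zero_or_pos with rfl | hm
  · exact (hasSocleDegree_dualFunctional hF hF0).apolarIdeal_le.trans (by simp [idealOfVars])
  let J : Ideal (MvPowerSeries (Fin m) K) := annR F ⊔ mxR K m ^ 2
  have hfinrank : m < Module.finrank K (MvPowerSeries (Fin m) K ⧸ J) := by
    rw [hilbQ, pow_one, sup_eq_right.2 (annR_le_mxR hF hF0), finrank_quotient_mxR] at h
    change Module.finrank K (MvPowerSeries (Fin m) K ⧸ J) - 1 = m at h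
    omega
  let π := (Ideal.Quotient.mkₐ K J).comp (coeToMvPowerSeries.algHom K)
  have hπ : Function.Surjective π := fun y => by
    obtain ⟨f, rfl⟩ := Ideal.Quotient.mk_surjective y
    obtain ⟨p, hp⟩ := exists_sub_coe_mem_annR hF f
    exact ⟨p, (Ideal.Quotient.eq.2 (Ideal.mem_sup_left hp)).symm⟩
  intro p hp
  refine ker_le_pow_two_of_card_lt_finrank π.toLinearMap hπ (fun q hq => ?_)
    (by rwa [Fintype.card_fin]) ?_
  · exact Ideal.Quotient.eq_zero_iff_mem.2 (Ideal.mem_sup_right (coe_mem_mxR_pow hq))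
  · exact Ideal.Quotient.eq_zero_iff_mem.2 (Ideal.mem_sup_left ((comap_annR hF).ge hp))

end HilbertFunction

section LeadingForm

variable {K : Type*} [Field K] {m : ℕ} {F G F₃ : MvPolynomial (Fin m) K}

open scoped Nat

lemma nonempty_algEquiv_annR_iff (hF : (F.totalDegree ! : K) ≠ 0) (hG : (G.totalDegree ! : K) ≠ 0) :
    Nonempty ((MvPowerSeries (Fin m) K ⧸ annR F) ≃ₐ[K] MvPowerSeries (Fin m) K ⧸ annR G) ↔
      Nonempty ((MvPolynomial (Fin m) K ⧸ apolarIdeal (dualFunctional F)) ≃ₐ[K]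
        MvPolynomial (Fin m) K ⧸ apolarIdeal (dualFunctional G)) := by
  obtain ⟨ΨF⟩ := nonempty_algEquiv_quotient_annR hF
  obtain ⟨ΨG⟩ := nonempty_algEquiv_quotient_annR hG
  exact ⟨fun ⟨Ψ⟩ => ⟨(ΨF.trans Ψ).trans ΨG.symm⟩, fun ⟨Ψ⟩ => ⟨(ΨF.symm.trans Ψ).trans ΨG⟩⟩

lemma totalDegree_eq_of_totalDegree_sub_lt {d : ℕ} (hF₃ : F₃.IsHomogeneous d) (hF₃0 : F₃ ≠ 0)
    (h : (F - F₃).totalDegree < d) : F.totalDegree = d := by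
  have hd := hF₃.totalDegree hF₃0
  rw [← add_sub_cancel F₃ F, totalDegree_add_eq_left_of_totalDegree_lt (hd.symm ▸ h), hd]

end LeadingForm

end ApolarAlgebra

open MvPolynomial ApolarAlgebra in
theorem aF_iso_iff_q0_iso_general {K : Type*} [Field K] (h6 : (6 : K) ≠ 0)
    (hsq : ∀ a : K, IsSquare a) {m : ℕ} (F G F3 G3 : MvPolynomial (Fin m) K)
    (hF3 : F3.IsHomogeneous 3) (hF3ne : F3 ≠ 0) (hFtop : (F - F3).totalDegree ≤ 2)
    (hG3 : G3.IsHomogeneous 3) (hG3ne : G3 ≠ 0) (hGtop : (G - G3).totalDegree ≤ 2)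
    (hF1 : hilbQ (annR F) 1 = m) (hG1 : hilbQ (annR G) 1 = m) :
    Nonempty ((MvPowerSeries (Fin m) K ⧸ annR F) ≃ₐ[K] (MvPowerSeries (Fin m) K ⧸ annR G)) ↔
      Nonempty ((MvPowerSeries (Fin m) K ⧸ annR F3) ≃ₐ[K]
        (MvPowerSeries (Fin m) K ⧸ annR G3)) := by
  have h2 : (2 : K) ≠ 0 := fun h => h6 (by linear_combination 3 * h)
  have hfact : ∀ {H : MvPolynomial (Fin m) K}, H.totalDegree = 3 →
      (H.totalDegree.factorial : K) ≠ 0 := fun hH => by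
    rw [hH]; exact_mod_cast h6
  have hF := totalDegree_eq_of_totalDegree_sub_lt hF3 hF3ne (Nat.lt_succ_of_le hFtop)
  have hG := totalDegree_eq_of_totalDegree_sub_lt hG3 hG3ne (Nat.lt_succ_of_le hGtop)
  have hF0 : F ≠ 0 := by rintro rfl; simp at hF
  have hG0 : G ≠ 0 := by rintro rfl; simp at hG
  have hsocle : ∀ {H : MvPolynomial (Fin m) K}, H.totalDegree = 3 → H ≠ 0 →
      HasSocleDegree (dualFunctional H) 3 := fun hH hH0 =>
    hH ▸ hasSocleDegree_dualFunctional (hfact hH) hH0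
  have hcF := cubicPart_dualFunctional_eq hFtop
  have hcG := cubicPart_dualFunctional_eq hGtop
  have hsF := hsocle hF hF0
  have hsG := hsocle hG hG0
  have hsF3 := hsocle (hF3.totalDegree hF3ne) hF3ne
  have hsG3 := hsocle (hG3.totalDegree hG3ne) hG3ne
  rw [nonempty_algEquiv_annR_iff (hfact hF) (hfact hG),
    nonempty_algEquiv_annR_iff (hfact (hF3.totalDegree hF3ne)) (hfact (hG3.totalDegree hG3ne))]
  refine ⟨fun ⟨Ψ⟩ => ?_, fun ⟨Ψ⟩ => ?_⟩
  · refine nonempty_algEquiv_of_cubicPart_eq h2 hsF3 hsG3 hsF hsG hcF hcG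
      (fun c _ hrank => ⟨LinearEquiv.ofFinrankEq _ _ hrank, fun x y => ?_⟩) Ψ
    rw [quadraticPart_dualFunctional_eq_zero hF3, quadraticPart_dualFunctional_eq_zero hG3]
    simp
  · exact nonempty_algEquiv_of_cubicPart_eq h2 hsF hsG hsF3 hsG3 hcF.symm hcG.symm
      (fun c hc hrank => exists_linearEquiv_ker_cubicPart_isometry h2 hsq hsF hsG
        (apolarIdeal_le_pow_two_of_hilbQ_one (hfact hF) hF0 hF1)
        (apolarIdeal_le_pow_two_of_hilbQ_one (hfact hG) hG0 hG1) hrank hc) Ψ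

/-- For `m ≥ n` and degree-three polynomials `F, G ∈ K[y_1,…,y_m]` with
top-degree forms `F_3, G_3`, if `A_F` and `A_G` have Hilbert function
`{1,m,n,1}`, then `A_F ≅ A_G` as `K`-algebras iff
`Q_{A_F}(0) = R/Ann_R(F_3)` and `Q_{A_G}(0) = R/Ann_R(G_3)` are isomorphic as
`K`-algebras. -/
theorem aF_iso_iff_q0_iso
    {K : Type*} [Field K] [IsAlgClosed K] [CharZero K] {m n : ℕ} (hnm : n ≤ m)
    (F G F3 G3 : MvPolynomial (Fin m) K)
    (hF3 : F3.IsHomogeneous 3) (hF3ne : F3 ≠ 0) (hFtop : (F - F3).totalDegree ≤ 2)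
    (hG3 : G3.IsHomogeneous 3) (hG3ne : G3 ≠ 0) (hGtop : (G - G3).totalDegree ≤ 2)
    (hF0 : hilbQ (annR F) 0 = 1) (hF1 : hilbQ (annR F) 1 = m)
    (hF2 : hilbQ (annR F) 2 = n) (hFs : hilbQ (annR F) 3 = 1)
    (hFm : mxR K m ^ 4 ≤ annR F)
    (hG0 : hilbQ (annR G) 0 = 1) (hG1 : hilbQ (annR G) 1 = m)
    (hG2 : hilbQ (annR G) 2 = n) (hGs : hilbQ (annR G) 3 = 1)
    (hGm : mxR K m ^ 4 ≤ annR G) :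
    Nonempty ((MvPowerSeries (Fin m) K ⧸ annR F) ≃ₐ[K]
        (MvPowerSeries (Fin m) K ⧸ annR G)) ↔
      Nonempty ((MvPowerSeries (Fin m) K ⧸ annR F3) ≃ₐ[K]
        (MvPowerSeries (Fin m) K ⧸ annR G3)) := by
  exact aF_iso_iff_q0_iso_general (by norm_num) (fun a => IsAlgClosed.exists_eq_mul_self a)
    F G F3 G3 hF3 hF3ne hFtop hG3 hG3ne hGtop hF1 hG1
end

section
/- Let R = K[[x_1,x_2]] and let A = R/(x_1^4, −x_1^3 + x_2^2). Then A is an Artinian Gorenstein local K-algebra with Hilbert function {1,2,2,2,1}, its associated graded ring is isomorphic to R/(x_1^4, x_2^2), and A is NOT isomorphic as a K-algebra to its associated graded ring. In particular, an Artinian Gorenstein local K-algebra with symmetric Hilbert function and socle degree four need not be canonically graded. -/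
/-- `dim_K` of the socle `(0 :_A m)` of `A = R/I`, where `m = M/I` is the
maximal ideal of `A`.  The Artinian local ring `A = R/I` is Gorenstein iff
this equals `1`. -/
noncomputable def socDimQ {K : Type*} [Field K] {n : ℕ}
    (I : Ideal (MvPowerSeries (Fin n) K)) : ℕ :=
  Module.finrank K
    ((Submodule.colon (⊥ : Ideal (MvPowerSeries (Fin n) K ⧸ I))
      ((mxR K n).map (Ideal.Quotient.mk I))).restrictScalars K)

/-- The total degree `|α| = α 1 + ⋯ + α n` of a multi-index. -/
def degM {n : ℕ} (α : Fin n →₀ ℕ) : ℕ := ∑ i, α i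

/-- The ideal `I^*` of `R` generated by the initial forms `f^*` of the elements
`f ∈ I` (for `f ≠ 0` of order `d`, `f^*` is the degree-`d` homogeneous component
of `f`; the set below consists of all such initial forms, together with `0`).
For an ideal `I` with `R/I` Artinian, `R/I^*` is (canonically isomorphic to) the
associated graded ring `gr_m(R/I) = ⊕_{i ≥ 0} m^i/m^(i+1)` of `A = R/I`. -/
noncomputable def initialIdeal {K : Type*} [Field K] {n : ℕ}
    (I : Ideal (MvPowerSeries (Fin n) K)) : Ideal (MvPowerSeries (Fin n) K) :=
  Ideal.span { g | ∃ f ∈ I, ∃ d : ℕ,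
    (∀ α : Fin n →₀ ℕ, degM α < d → MvPowerSeries.coeff α f = 0) ∧
    (∀ α : Fin n →₀ ℕ, MvPowerSeries.coeff α g =
      if degM α = d then MvPowerSeries.coeff α f else 0) }

/-- The variable `x_i` of `R = K[[x_1,…,x_n]]`. -/
noncomputable def psX {K : Type*} [Field K] {n : ℕ} (i : Fin n) :
    MvPowerSeries (Fin n) K := MvPowerSeries.X i

/-
With `x = x₁` and `y = x₂`, the coefficients of `xⁱ yʲ` (`i ≤ 3`, `j ≤ 1`) in the normal form of a
power series modulo `y² = e x³`, `x⁴ = 0` are explicit linear functionals whose common kernel is the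
ideal `(x⁴, y² - e x³)`; from them one reads off the socle, the Hilbert function and the initial
ideal `(x⁴, y²)`.
The two quotients are told apart by their square-zero elements. If `f` has linear part
`u x + v y`, the normal form of `f²` has `x²`-coefficient `u²` and, once `u = 0`, `x³`-coefficient
`e v²`; so for `e ≠ 0` every square-zero element lies in the square of the nilradical, whereas for
`e = 0` the class of `y` does not.
-/

open MvPowerSeries

theorem mem_span_X_pow_pair_iff {σ R : Type*} [CommSemiring R] {s t : σ} {a b : ℕ}
    {f : MvPowerSeries σ R} :
    f ∈ Ideal.span {X s ^ a, X t ^ b} ↔ ∀ m : σ →₀ ℕ, m s < a → m t < b → coeff m f = 0 := by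
  constructor
  · intro hf m hs ht
    obtain ⟨u, v, rfl⟩ := Ideal.mem_span_pair.1 hf
    rw [map_add, X_pow_dvd_iff.1 (Dvd.intro_left u rfl) m hs,
      X_pow_dvd_iff.1 (Dvd.intro_left v rfl) m ht, add_zero]
  · intro hf
    let g : MvPowerSeries σ R := fun m => if a ≤ m s then coeff m f else 0
    let h : MvPowerSeries σ R := fun m => if a ≤ m s then 0 else coeff m f
    have coeff_g (m) : coeff m g = if a ≤ m s then coeff m f else 0 := rfl
    have coeff_h (m) : coeff m h = if a ≤ m s then 0 else coeff m f := rfl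
    have hg : X s ^ a ∣ g := X_pow_dvd_iff.2 fun m hm => by rw [coeff_g, if_neg hm.not_ge]
    have hh : X t ^ b ∣ h := X_pow_dvd_iff.2 fun m hm => by
      rw [coeff_h]
      split_ifs with hs
      exacts [rfl, hf m (not_le.1 hs) hm]
    have hfgh : f = g + h := by
      ext m
      rw [map_add, coeff_g, coeff_h]
      split_ifs <;> simp
    rw [hfgh]
    exact add_mem (Ideal.mem_of_dvd _ hg (Ideal.subset_span (Set.mem_insert _ _)))
      (Ideal.mem_of_dvd _ hh (Ideal.subset_span (Set.mem_insert_of_mem _ rfl)))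

theorem finrank_quotient_eq_card_of_dual {K R ι : Type*} [Field K] [CommRing R] [Algebra K R]
    [Fintype ι] [DecidableEq ι] {I : Ideal R} (φ : ι → R →ₗ[K] K) (v : ι → R)
    (hφv : ∀ i j, φ i (v j) = if i = j then 1 else 0) (hI : ∀ r, r ∈ I ↔ ∀ i, φ i r = 0) :
    Module.finrank K (R ⧸ I) = Fintype.card ι := by
  have hsurj : Function.Surjective (LinearMap.pi φ) := fun c =>
    ⟨∑ j, c j • v j, by ext i; simp [hφv]⟩
  have hker : LinearMap.ker (LinearMap.pi φ) = I.restrictScalars K := by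
    ext r
    simp [hI, funext_iff]
  have e := (Submodule.quotEquivOfEq _ _ hker.symm).trans
    ((LinearMap.pi φ).quotKerEquivOfSurjective hsurj)
  rw [← ((Submodule.Quotient.restrictScalarsEquiv K I).symm.trans e).finrank_eq.symm,
    Module.finrank_fintype_fun_eq_card]

theorem map_mem_nilradical_pow {A B : Type*} [CommRing A] [CommRing B] (φ : A →+* B) {a : A}
    {k : ℕ} (ha : a ∈ nilradical A ^ k) : φ a ∈ nilradical B ^ k := by
  have hle : nilradical A ≤ (nilradical B).comap φ := fun _ hx => IsNilpotent.map hx φ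
  exact Ideal.le_comap_pow φ k (Ideal.pow_right_mono hle k ha)

section MaximalIdeal

variable {K : Type*} [Field K] {n : ℕ} {I : Ideal (MvPowerSeries (Fin n) K)}
  {f : MvPowerSeries (Fin n) K}

theorem mem_mxR_iff : f ∈ mxR K n ↔ constantCoeff f = 0 := Iff.rfl

theorem psX_mem_mxR (i : Fin n) : psX i ∈ mxR K n := constantCoeff_X i

theorem le_order_of_mem_mxR_pow {d : ℕ} (hf : f ∈ mxR K n ^ d) : (d : ℕ∞) ≤ f.order := by
  induction d generalizing f with
  | zero => simp
  | succ d ih =>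
    rw [pow_succ] at hf
    refine Submodule.mul_induction_on hf (fun g hg h hh => ?_) fun g h hg hh => ?_
    · push_cast
      exact (add_le_add (ih hg) (one_le_order_iff_constCoeff_eq_zero.2 hh)).trans le_order_mul
    · exact (le_min hg hh).trans min_order_le_add

theorem nilradical_quotient_eq_map_mxR {k : ℕ} (hI : I ≤ mxR K n) (hk : mxR K n ^ k ≤ I) :
    nilradical (MvPowerSeries (Fin n) K ⧸ I) = (mxR K n).map (Ideal.Quotient.mk I) := by
  have : (mxR K n).IsPrime := RingHom.ker_isPrime _
  apply le_antisymm
  · intro a ha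
    obtain ⟨f, rfl⟩ := Ideal.Quotient.mk_surjective a
    obtain ⟨m, hm⟩ := mem_nilradical.1 ha
    rw [← map_pow, Ideal.Quotient.eq_zero_iff_mem] at hm
    exact Ideal.mem_map_of_mem _ (Ideal.IsPrime.mem_of_pow_mem this m (hI hm))
  · refine Ideal.map_le_iff_le_comap.2 fun f hf => mem_nilradical.2 ⟨k, ?_⟩
    rw [← map_pow, Ideal.Quotient.eq_zero_iff_mem]
    exact hk (Ideal.pow_mem_pow hf k)

theorem mk_mem_socle_iff :
    Ideal.Quotient.mk I f ∈ Submodule.colon (⊥ : Ideal (MvPowerSeries (Fin n) K ⧸ I))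
      ((mxR K n).map (Ideal.Quotient.mk I)) ↔ ∀ g ∈ mxR K n, g * f ∈ I := by
  have hmul (g) : Ideal.Quotient.mk I f • Ideal.Quotient.mk I g ∈
      (⊥ : Ideal (MvPowerSeries (Fin n) K ⧸ I)) ↔ g * f ∈ I := by
    rw [Submodule.mem_bot, smul_eq_mul, ← map_mul, Ideal.Quotient.eq_zero_iff_mem, mul_comm]
  rw [Submodule.mem_colon]
  constructor
  · exact fun h g hg => (hmul g).1 (h _ (Ideal.mem_map_of_mem _ hg))
  · intro h a ha
    obtain ⟨g, hg, rfl⟩ :=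
      (Ideal.mem_map_iff_of_surjective _ Ideal.Quotient.mk_surjective).1 ha
    exact (hmul g).2 (h g hg)

end MaximalIdeal

section InitialIdeal

variable {K : Type*} [Field K] {n : ℕ} {I : Ideal (MvPowerSeries (Fin n) K)}

theorem initialIdeal_eq_span : initialIdeal I =
    Ideal.span {g | ∃ f ∈ I, ∃ d : ℕ, (d : ℕ∞) ≤ f.order ∧ homogeneousComponent d f = g} := by
  have degM_eq (α : Fin n →₀ ℕ) : degM α = α.degree := (Finsupp.degree_eq_sum α).symm
  have le_order_iff (f : MvPowerSeries (Fin n) K) (d : ℕ) :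
      (∀ α, degM α < d → coeff α f = 0) ↔ (d : ℕ∞) ≤ f.order := by
    simp only [degM_eq]
    exact ⟨nat_le_order, fun h α hα => coeff_of_lt_order ((Nat.cast_lt.2 hα).trans_le h)⟩
  have component_iff (f g : MvPowerSeries (Fin n) K) (d : ℕ) :
      (∀ α, coeff α g = if degM α = d then coeff α f else 0) ↔ homogeneousComponent d f = g := by
    simp only [degM_eq, MvPowerSeries.ext_iff, coeff_homogeneousComponent, eq_comm]
  simp only [initialIdeal, le_order_iff, component_iff]

theorem homogeneousComponent_mem_initialIdeal {f : MvPowerSeries (Fin n) K} {d : ℕ} (hf : f ∈ I)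
    (hd : (d : ℕ∞) ≤ f.order) : homogeneousComponent d f ∈ initialIdeal I := by
  rw [initialIdeal_eq_span]
  exact Ideal.subset_span ⟨f, hf, d, hd, rfl⟩

theorem homogeneousComponent_psX_pow (i : Fin n) (d : ℕ) :
    homogeneousComponent d (psX i ^ d : MvPowerSeries (Fin n) K) = psX i ^ d := by
  classical
  ext α
  rw [coeff_homogeneousComponent, psX, coeff_X_pow]
  split_ifs <;> simp_all

end InitialIdeal

section Bicoeff

variable {K : Type*} [Field K]

/-- The coefficient of `x₁ ^ a * x₂ ^ b` in a power series in two variables. -/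
noncomputable def bicoeff (a b : ℕ) : MvPowerSeries (Fin 2) K →ₗ[K] K :=
  coeff (Finsupp.single 0 a + Finsupp.single 1 b)

theorem coeff_eq_bicoeff (m : Fin 2 →₀ ℕ) (f : MvPowerSeries (Fin 2) K) :
    coeff m f = bicoeff (m 0) (m 1) f := by
  have hm : Finsupp.single 0 (m 0) + Finsupp.single 1 (m 1) = m := by
    ext i; fin_cases i <;> simp
  rw [bicoeff, hm]

theorem bicoeff_zero_zero (f : MvPowerSeries (Fin 2) K) : bicoeff 0 0 f = constantCoeff f :=
  (coeff_eq_bicoeff 0 f).symm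

theorem bicoeff_psX_zero_pow_mul (a b n : ℕ) (f : MvPowerSeries (Fin 2) K) :
    bicoeff a b (psX 0 ^ n * f) = if n ≤ a then bicoeff (a - n) b f else 0 := by
  rw [bicoeff, psX, X_pow_eq, coeff_monomial_mul, one_mul, coeff_eq_bicoeff]
  have hle : Finsupp.single 0 n ≤ Finsupp.single 0 a + Finsupp.single (1 : Fin 2) b ↔ n ≤ a := by
    simp [Finsupp.le_def, Fin.forall_fin_two]
  simp [hle]

theorem bicoeff_psX_one_pow_mul (a b n : ℕ) (f : MvPowerSeries (Fin 2) K) :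
    bicoeff a b (psX 1 ^ n * f) = if n ≤ b then bicoeff a (b - n) f else 0 := by
  rw [bicoeff, psX, X_pow_eq, coeff_monomial_mul, one_mul, coeff_eq_bicoeff]
  have hle : Finsupp.single 1 n ≤ Finsupp.single (0 : Fin 2) a + Finsupp.single 1 b ↔ n ≤ b := by
    simp [Finsupp.le_def, Fin.forall_fin_two]
  simp [hle]

theorem bicoeff_psX_pow_mul_psX_pow (a b c d : ℕ) :
    bicoeff a b (psX 0 ^ c * psX 1 ^ d : MvPowerSeries (Fin 2) K) =
      if a = c ∧ b = d then 1 else 0 := by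
  classical
  have hinj : Finsupp.single 0 a + Finsupp.single 1 b =
      Finsupp.single (0 : Fin 2) c + Finsupp.single 1 d ↔ a = c ∧ b = d := by
    simp [Finsupp.ext_iff, Fin.forall_fin_two]
  rw [bicoeff, psX, psX, X_pow_eq, X_pow_eq, monomial_mul_monomial, one_mul, coeff_monomial]
  simp only [hinj]

theorem bicoeff_eq_zero_of_lt_order {a b : ℕ} {f : MvPowerSeries (Fin 2) K}
    (h : ((a + b : ℕ) : ℕ∞) < f.order) : bicoeff a b f = 0 :=
  coeff_of_lt_order (by simpa using h)

theorem bicoeff_eq_zero_of_mem_mxR_pow {a b d : ℕ} {f : MvPowerSeries (Fin 2) K}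
    (hf : f ∈ mxR K 2 ^ d) (h : a + b < d) : bicoeff a b f = 0 :=
  bicoeff_eq_zero_of_lt_order ((Nat.cast_lt.2 h).trans_le (le_order_of_mem_mxR_pow hf))

theorem bicoeff_homogeneousComponent (a b d : ℕ) (f : MvPowerSeries (Fin 2) K) :
    bicoeff a b (homogeneousComponent d f) = if a + b = d then bicoeff a b f else 0 := by
  simp [bicoeff, coeff_homogeneousComponent]

theorem mxR_two_eq_span : mxR K 2 = Ideal.span {psX 0, psX 1} := by
  apply le_antisymm
  · intro f hf
    rw [← pow_one (psX 0), ← pow_one (psX 1)]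
    refine mem_span_X_pow_pair_iff.2 fun m h₀ h₁ => ?_
    rwa [coeff_eq_bicoeff, Nat.lt_one_iff.1 h₀, Nat.lt_one_iff.1 h₁, bicoeff_zero_zero]
  · rw [Ideal.span_le, Set.pair_subset_iff]
    exact ⟨psX_mem_mxR 0, psX_mem_mxR 1⟩

end Bicoeff

/-- The ideal `(x₁ ^ (p + 1), x₂ ^ (q + 1) - e x₁ ^ p)`. It deforms the monomial ideal at `e = 0`
to the ideal of the truncated cuspidal curve `x₂ ^ (q + 1) = x₁ ^ p` at `e = 1`. -/
noncomputable def cuspIdeal {K : Type*} [Field K] (p q : ℕ) (e : K) :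
    Ideal (MvPowerSeries (Fin 2) K) :=
  Ideal.span {psX 0 ^ (p + 1), psX 1 ^ (q + 1) - e • psX 0 ^ p}

/-- The coefficient of `x₁ ^ i * x₂ ^ j` (`i ≤ p`, `j ≤ q`) in the normal form of `f` modulo
`cuspIdeal p q e`: the relation `x₂ ^ (q + 1) = e x₁ ^ p` moves `x₂ ^ (q + 1 + j)` to
`e x₁ ^ p * x₂ ^ j`, and all other monomials outside the box vanish. -/
noncomputable def cuspCoeff {K : Type*} [Field K] (p q : ℕ) (e : K) (i j : ℕ) :
    MvPowerSeries (Fin 2) K →ₗ[K] K :=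
  bicoeff i j + (if i = p then e else 0) • bicoeff 0 (j + (q + 1))

namespace cuspIdeal

variable {K : Type*} [Field K] {p q : ℕ} {e : K} {f : MvPowerSeries (Fin 2) K}

theorem cuspCoeff_apply (p q : ℕ) (e : K) (i j : ℕ) (f : MvPowerSeries (Fin 2) K) :
    cuspCoeff p q e i j f = bicoeff i j f + (if i = p then e else 0) * bicoeff 0 (j + (q + 1)) f :=
  rfl

theorem cuspCoeff_psX_pow_mul_psX_pow (p : ℕ) (e : K) (i j a : ℕ) {b : ℕ} (hb : b ≤ q) :
    cuspCoeff p q e i j (psX 0 ^ a * psX 1 ^ b) = if i = a ∧ j = b then 1 else 0 := by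
  have hne : ¬(0 = a ∧ j + (q + 1) = b) := by omega
  rw [cuspCoeff_apply, bicoeff_psX_pow_mul_psX_pow, bicoeff_psX_pow_mul_psX_pow, if_neg hne,
    mul_zero, add_zero]

theorem cuspCoeff_psX_zero_mul (q : ℕ) (e : K) {i : ℕ} (hi : i < p) (j : ℕ)
    (f : MvPowerSeries (Fin 2) K) :
    cuspCoeff p q e (i + 1) j (psX 0 * f) = cuspCoeff p q e i j f := by
  rw [← pow_one (psX 0), cuspCoeff_apply, cuspCoeff_apply, bicoeff_psX_zero_pow_mul,
    bicoeff_psX_zero_pow_mul]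
  simp [hi.ne]

theorem cuspCoeff_psX_one_mul (p q : ℕ) (e : K) (i j : ℕ) (f : MvPowerSeries (Fin 2) K) :
    cuspCoeff p q e i (j + 1) (psX 1 * f) = cuspCoeff p q e i j f := by
  rw [← pow_one (psX 1), cuspCoeff_apply, cuspCoeff_apply, bicoeff_psX_one_pow_mul,
    bicoeff_psX_one_pow_mul]
  simp [add_right_comm j 1]

theorem psX_zero_pow_mem (p q : ℕ) (e : K) : psX 0 ^ (p + 1) ∈ cuspIdeal p q e :=
  Ideal.subset_span (Set.mem_insert _ _)

theorem psX_one_pow_sub_mem (p q : ℕ) (e : K) :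
    psX 1 ^ (q + 1) - e • psX 0 ^ p ∈ cuspIdeal p q e :=
  Ideal.subset_span (Set.mem_insert_of_mem _ rfl)

theorem psX_zero_pow_mul_psX_one_pow_mem (hp : 0 < p) (q : ℕ) (e : K) :
    psX 0 ^ p * psX 1 ^ (q + 1) ∈ cuspIdeal p q e := by
  have hx : psX 0 ^ p * psX 0 ^ p ∈ cuspIdeal p q e := by
    rw [← pow_add]
    exact Ideal.mem_of_dvd _ (pow_dvd_pow _ (Nat.add_le_add_left hp p)) (psX_zero_pow_mem p q e)
  have hxy := add_mem (Ideal.mul_mem_left _ (psX 0 ^ p) (psX_one_pow_sub_mem p q e))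
    (Submodule.smul_of_tower_mem _ e hx)
  rwa [mul_sub, mul_smul_comm, sub_add_cancel] at hxy

theorem psX_zero_pow_mul_mem (hp : 0 < p) (hf : ∀ b ≤ q, bicoeff 0 b f = 0) :
    psX 0 ^ p * f ∈ cuspIdeal p q e := by
  have hspan : f ∈ Ideal.span {psX 0 ^ 1, psX 1 ^ (q + 1)} :=
    mem_span_X_pow_pair_iff.2 fun m h₀ h₁ => by
      rw [coeff_eq_bicoeff, Nat.lt_one_iff.1 h₀, hf _ (Nat.lt_succ_iff.1 h₁)]
  obtain ⟨u, v, rfl⟩ := Ideal.mem_span_pair.1 hspan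
  have hsum := add_mem (Ideal.mul_mem_left _ u (psX_zero_pow_mem p q e))
    (Ideal.mul_mem_left _ v (psX_zero_pow_mul_psX_one_pow_mem hp q e))
  convert hsum using 1
  ring

theorem cuspCoeff_eq_zero_of_mem (hp : 0 < p) (hf : f ∈ cuspIdeal p q e) {i j : ℕ} (hi : i ≤ p)
    (hj : j ≤ q) : cuspCoeff p q e i j f = 0 := by
  obtain ⟨u, v, rfl⟩ := Ideal.mem_span_pair.1 hf
  have hu : cuspCoeff p q e i j (psX 0 ^ (p + 1) * u) = 0 := by
    simp [cuspCoeff_apply, bicoeff_psX_zero_pow_mul, hi.not_gt]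
  have hy : cuspCoeff p q e i j (psX 1 ^ (q + 1) * v) = if i = p then e * bicoeff 0 j v else 0 := by
    simp [cuspCoeff_apply, bicoeff_psX_one_pow_mul, hj.not_gt]
  have hx : cuspCoeff p q e i j (psX 0 ^ p * v) = if i = p then bicoeff 0 j v else 0 := by
    have hip : p ≤ i ↔ i = p := ⟨fun h => hi.antisymm h, Eq.ge⟩
    simp only [cuspCoeff_apply, bicoeff_psX_zero_pow_mul, hip, hp.not_ge, if_false, mul_zero,
      add_zero]
    split_ifs with h <;> simp [h]
  rw [mul_comm u, mul_comm v, sub_mul, smul_mul_assoc, map_add, map_sub, map_smul, hu, hy, hx]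
  split_ifs <;> simp

theorem mem_of_cuspCoeff_eq_zero (hp : 0 < p)
    (hf : ∀ i ≤ p, ∀ j ≤ q, cuspCoeff p q e i j f = 0) : f ∈ cuspIdeal p q e := by
  -- Divide `f` by `x₂ ^ (q + 1)` and replace the quotient `h` by `e x₁ ^ p * h`.
  let h : MvPowerSeries (Fin 2) K := fun m => bicoeff (m 0) (m 1 + (q + 1)) f
  have hh (a b) : bicoeff a b h = bicoeff a (b + (q + 1)) f := by
    change bicoeff _ _ f = _
    simp
  let r := f - (psX 1 ^ (q + 1) - e • psX 0 ^ p) * h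
  have hr (a b) : bicoeff a b r = (if b ≤ q then bicoeff a b f else 0) +
      if p ≤ a then e * bicoeff (a - p) (b + (q + 1)) f else 0 := by
    simp only [r, sub_mul, smul_mul_assoc, map_sub, map_smul, bicoeff_psX_one_pow_mul,
      bicoeff_psX_zero_pow_mul, hh, smul_eq_mul, mul_ite, mul_zero]
    by_cases hb : b ≤ q
    · simp [hb, hb.not_gt, sub_eq_add_neg]
    · simp [hb, not_le.1 hb]
  obtain ⟨k, hk⟩ : psX 0 ^ p ∣ r := X_pow_dvd_iff.2 fun m hm => by
    have hfm (hb : m 1 ≤ q) : bicoeff (m 0) (m 1) f = 0 := by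
      simpa [cuspCoeff_apply, hm.ne] using hf _ hm.le _ hb
    rw [coeff_eq_bicoeff, hr, if_neg hm.not_ge, add_zero]
    split_ifs with hb
    exacts [hfm hb, rfl]
  have hrJ : r ∈ cuspIdeal p q e := by
    rw [hk]
    refine psX_zero_pow_mul_mem hp fun b hb => ?_
    have hrb : bicoeff p b r = 0 := by
      rw [hr, if_pos hb]
      simpa [cuspCoeff_apply] using hf p le_rfl b hb
    rwa [hk, bicoeff_psX_zero_pow_mul, if_pos le_rfl, Nat.sub_self] at hrb
  have hfr := add_mem hrJ (Ideal.mul_mem_right h _ (psX_one_pow_sub_mem p q e))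
  rwa [sub_add_cancel] at hfr

theorem sub_sum_cuspCoeff_mem (hp : 0 < p) (q : ℕ) (e : K) (f : MvPowerSeries (Fin 2) K) :
    f - ∑ z : Fin (p + 1) × Fin (q + 1),
      cuspCoeff p q e z.1 z.2 f • (psX 0 ^ (z.1 : ℕ) * psX 1 ^ (z.2 : ℕ)) ∈ cuspIdeal p q e := by
  refine mem_of_cuspCoeff_eq_zero hp fun i hi j hj => ?_
  lift i to Fin (p + 1) using Nat.lt_succ_of_le hi
  lift j to Fin (q + 1) using Nat.lt_succ_of_le hj
  have hij (z : Fin (p + 1) × Fin (q + 1)) : (i : ℕ) = z.1 ∧ (j : ℕ) = z.2 ↔ (i, j) = z := by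
    simp only [Prod.ext_iff, Fin.ext_iff]
  simp [cuspCoeff_psX_pow_mul_psX_pow _ _ _ _ _ (Fin.is_le _), hij]

theorem mem_sup_mxR_pow_iff (hqp : q < p) (d : ℕ) :
    f ∈ cuspIdeal p q e ⊔ mxR K 2 ^ d ↔
      ∀ i ≤ p, ∀ j ≤ q, i + j < d → cuspCoeff p q e i j f = 0 := by
  constructor
  · intro hf i hi j hj hd
    obtain ⟨g, hg, h, hh, rfl⟩ := Submodule.mem_sup.1 hf
    have hh_low : bicoeff i j h = 0 := bicoeff_eq_zero_of_mem_mxR_pow hh hd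
    have hh_high (hip : i = p) : bicoeff 0 (j + (q + 1)) h = 0 :=
      bicoeff_eq_zero_of_mem_mxR_pow hh (by omega)
    rw [map_add, cuspCoeff_eq_zero_of_mem (by omega) hg hi hj, cuspCoeff_apply, hh_low]
    split_ifs with hip
    · simp [hh_high hip]
    · simp
  · intro hf
    rw [← sub_add_cancel f]
    refine Submodule.add_mem_sup (sub_sum_cuspCoeff_mem (by omega) q e f)
      (sum_mem fun z _ => ?_)
    by_cases hz : (z.1 : ℕ) + z.2 < d
    · rw [hf _ z.1.is_le _ z.2.is_le hz, zero_smul]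
      exact zero_mem _
    · refine Submodule.smul_of_tower_mem _ _ (Ideal.pow_le_pow_right (not_lt.1 hz) ?_)
      rw [pow_add]
      exact Ideal.mul_mem_mul (Ideal.pow_mem_pow (psX_mem_mxR 0) _)
        (Ideal.pow_mem_pow (psX_mem_mxR 1) _)

theorem finrank_quotient_sup_mxR_pow (hqp : q < p) (e : K) (d : ℕ) :
    Module.finrank K (MvPowerSeries (Fin 2) K ⧸ (cuspIdeal p q e ⊔ mxR K 2 ^ d)) =
      Fintype.card {z : Fin (p + 1) × Fin (q + 1) // (z.1 : ℕ) + z.2 < d} := by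
  refine finrank_quotient_eq_card_of_dual (fun z => cuspCoeff p q e z.1.1 z.1.2)
    (fun z => psX 0 ^ (z.1.1 : ℕ) * psX 1 ^ (z.1.2 : ℕ)) (fun z w => ?_) fun f => ?_
  · rw [cuspCoeff_psX_pow_mul_psX_pow _ _ _ _ _ w.1.2.is_le]
    simp only [Subtype.ext_iff, Prod.ext_iff, Fin.ext_iff]
  · rw [mem_sup_mxR_pow_iff hqp]
    exact ⟨fun h z => h _ z.1.1.is_le _ z.1.2.is_le z.2, fun h i hi j hj hd =>
      h ⟨(⟨i, Nat.lt_succ_of_le hi⟩, ⟨j, Nat.lt_succ_of_le hj⟩), hd⟩⟩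

theorem hilbQ_eq (hqp : q < p) (e : K) (d : ℕ) :
    hilbQ (cuspIdeal p q e) d =
      Fintype.card {z : Fin (p + 1) × Fin (q + 1) // (z.1 : ℕ) + z.2 = d} := by
  simp only [hilbQ, finrank_quotient_sup_mxR_pow hqp, Nat.lt_succ_iff_lt_or_eq]
  rw [Fintype.card_subtype_or_disjoint, Nat.add_sub_cancel_left]
  exact Pi.disjoint_iff.2 fun z => by simpa using ne_of_lt

theorem mxR_pow_le (hqp : q < p) (e : K) {d : ℕ} (hd : p + q < d) :
    mxR K 2 ^ d ≤ cuspIdeal p q e := by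
  intro f hf
  refine mem_of_cuspCoeff_eq_zero (by omega) fun i hi j hj => ?_
  exact (mem_sup_mxR_pow_iff hqp _).1 (Submodule.mem_sup_right hf) i hi j hj (by omega)

theorem le_mxR (hp : 0 < p) (q : ℕ) (e : K) : cuspIdeal p q e ≤ mxR K 2 := by
  rw [cuspIdeal, Ideal.span_le, Set.pair_subset_iff]
  exact ⟨Ideal.pow_mem_of_mem _ (psX_mem_mxR 0) _ p.succ_pos,
    sub_mem (Ideal.pow_mem_of_mem _ (psX_mem_mxR 1) _ q.succ_pos)
      (Submodule.smul_of_tower_mem _ e (Ideal.pow_mem_of_mem _ (psX_mem_mxR 0) _ hp))⟩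

theorem mul_psX_pow_mul_psX_pow_mem (hp : 0 < p) (q : ℕ) (e : K) {g : MvPowerSeries (Fin 2) K}
    (hg : g ∈ mxR K 2) : g * (psX 0 ^ p * psX 1 ^ q) ∈ cuspIdeal p q e := by
  rw [mxR_two_eq_span] at hg
  obtain ⟨u, v, rfl⟩ := Ideal.mem_span_pair.1 hg
  have hsum := add_mem (Ideal.mul_mem_left _ (u * psX 1 ^ q) (psX_zero_pow_mem p q e))
    (Ideal.mul_mem_left _ v (psX_zero_pow_mul_psX_one_pow_mem hp q e))
  convert hsum using 1
  ring

theorem sub_smul_psX_pow_mul_psX_pow_mem (hp : 0 < p) (hx : psX 0 * f ∈ cuspIdeal p q e)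
    (hy : psX 1 * f ∈ cuspIdeal p q e) :
    f - cuspCoeff p q e p q f • (psX 0 ^ p * psX 1 ^ q) ∈ cuspIdeal p q e := by
  refine mem_of_cuspCoeff_eq_zero hp fun i hi j hj => ?_
  rw [map_sub, map_smul, cuspCoeff_psX_pow_mul_psX_pow _ _ _ _ _ le_rfl, sub_eq_zero]
  rcases hi.lt_or_eq with hi | rfl
  · rw [if_neg fun h => hi.ne h.1, smul_zero, ← cuspCoeff_psX_zero_mul q e hi]
    exact cuspCoeff_eq_zero_of_mem hp hx hi hj
  rcases hj.lt_or_eq with hj | rfl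
  · rw [if_neg fun h => hj.ne h.2, smul_zero, ← cuspCoeff_psX_one_mul]
    exact cuspCoeff_eq_zero_of_mem hp hy le_rfl hj
  · simp

theorem socDimQ_eq_one (hp : 0 < p) (q : ℕ) (e : K) : socDimQ (cuspIdeal p q e) = 1 := by
  let s : MvPowerSeries (Fin 2) K := psX 0 ^ p * psX 1 ^ q
  have hs : s ∉ cuspIdeal p q e := fun hs => by
    simpa [s, cuspCoeff_psX_pow_mul_psX_pow] using cuspCoeff_eq_zero_of_mem hp hs le_rfl le_rfl
  refine finrank_eq_one_iff'.2 ⟨⟨Ideal.Quotient.mk _ s,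
    mk_mem_socle_iff.2 fun g => mul_psX_pow_mul_psX_pow_mem hp q e⟩, fun h => ?_, ?_⟩
  · exact hs (Ideal.Quotient.eq_zero_iff_mem.1 (congrArg Subtype.val h))
  · rintro ⟨a, ha⟩
    obtain ⟨f, rfl⟩ := Ideal.Quotient.mk_surjective a
    have hf := mk_mem_socle_iff.1 ha
    exact ⟨cuspCoeff p q e p q f, Subtype.ext (Ideal.Quotient.mk_eq_mk_iff_sub_mem _ _ |>.2
      (sub_smul_psX_pow_mul_psX_pow_mem hp (hf _ (psX_mem_mxR 0)) (hf _ (psX_mem_mxR 1)))).symm⟩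

theorem initialIdeal_le (hqp : q + 1 < p) (e : K) :
    initialIdeal (cuspIdeal p q e) ≤ cuspIdeal p q 0 := by
  rw [initialIdeal_eq_span, Ideal.span_le]
  rintro _ ⟨f, hf, d, hd, rfl⟩
  refine mem_of_cuspCoeff_eq_zero (by omega) fun i hi j hj => ?_
  rw [cuspCoeff_apply, ite_self, zero_mul, add_zero, bicoeff_homogeneousComponent]
  split_ifs with hij
  · have hfij := cuspCoeff_eq_zero_of_mem (by omega) hf hi hj
    have hf_high (hip : i = p) : bicoeff 0 (j + (q + 1)) f = 0 :=
      bicoeff_eq_zero_of_lt_order ((Nat.cast_lt.2 (by omega)).trans_le hd)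
    by_cases hip : i = p
    · rwa [cuspCoeff_apply, hf_high hip, mul_zero, add_zero] at hfij
    · rwa [cuspCoeff_apply, if_neg hip, zero_mul, add_zero] at hfij
  · rfl

theorem le_initialIdeal (hqp : q + 1 < p) (e : K) :
    cuspIdeal p q 0 ≤ initialIdeal (cuspIdeal p q e) := by
  have hpow (i : Fin 2) (d : ℕ) : (psX i ^ d : MvPowerSeries (Fin 2) K) ∈ mxR K 2 ^ d :=
    Ideal.pow_mem_pow (psX_mem_mxR i) d
  have htail : e • psX 0 ^ p ∈ mxR K 2 ^ (q + 1 + 1) :=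
    Submodule.smul_of_tower_mem _ e (Ideal.pow_le_pow_right hqp (hpow 0 p))
  rw [cuspIdeal, Ideal.span_le, Set.pair_subset_iff]
  constructor
  · have hx := homogeneousComponent_mem_initialIdeal (psX_zero_pow_mem p q e)
      (le_order_of_mem_mxR_pow (hpow 0 (p + 1)))
    rwa [homogeneousComponent_psX_pow] at hx
  · have hy := homogeneousComponent_mem_initialIdeal (psX_one_pow_sub_mem p q e)
      (le_order_of_mem_mxR_pow
        (sub_mem (hpow 1 (q + 1)) (Ideal.pow_le_pow_right (Nat.le_succ _) htail)))
    rw [map_sub, homogeneousComponent_psX_pow, homogeneousComponent_of_lt_order_eq_zero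
      ((Nat.cast_lt.2 (Nat.lt_succ_self _)).trans_le (le_order_of_mem_mxR_pow htail))] at hy
    rwa [zero_smul]

theorem initialIdeal_eq (hqp : q + 1 < p) (e : K) :
    initialIdeal (cuspIdeal p q e) = cuspIdeal p q 0 :=
  (initialIdeal_le hqp e).antisymm (le_initialIdeal hqp e)

theorem mem_mxR_sq_of_sq_mem (he : e ≠ 0) (hf : f ^ 2 ∈ cuspIdeal 3 1 e) : f ∈ mxR K 2 ^ 2 := by
  have hf_mem : f ∈ mxR K 2 :=
    (RingHom.ker_isPrime _).mem_of_pow_mem 2 (le_mxR (by norm_num) 1 e hf)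
  rw [mxR_two_eq_span] at hf_mem
  obtain ⟨u, v, rfl⟩ := Ideal.mem_span_pair.1 hf_mem
  have hsq : (u * psX 0 + v * psX 1) ^ 2 =
      psX 0 ^ 2 * u ^ 2 + psX 1 ^ 1 * (psX 0 ^ 1 * (2 * u * v)) + psX 1 ^ 2 * v ^ 2 := by ring
  have hu : u ∈ mxR K 2 := by
    have h₂₀ := cuspCoeff_eq_zero_of_mem (by norm_num) hf (i := 2) (j := 0) (by simp) (by simp)
    simp only [hsq, cuspCoeff_apply, map_add, bicoeff_psX_zero_pow_mul,
      bicoeff_psX_one_pow_mul] at h₂₀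
    simpa [mem_mxR_iff, bicoeff_zero_zero] using h₂₀
  have hv : v ∈ mxR K 2 := by
    have h₃₀ := cuspCoeff_eq_zero_of_mem (by norm_num) hf (i := 3) (j := 0) (by simp) (by simp)
    have hu_sq : bicoeff 1 0 (u ^ 2) = 0 :=
      bicoeff_eq_zero_of_mem_mxR_pow (Ideal.pow_mem_pow hu 2) (by norm_num)
    simp only [hsq, cuspCoeff_apply, map_add, bicoeff_psX_zero_pow_mul,
      bicoeff_psX_one_pow_mul] at h₃₀
    simpa [mem_mxR_iff, bicoeff_zero_zero, hu_sq, he] using h₃₀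
  rw [pow_two (mxR K 2)]
  exact add_mem (Ideal.mul_mem_mul hu (psX_mem_mxR 0)) (Ideal.mul_mem_mul hv (psX_mem_mxR 1))

theorem nilradical_quotient_eq (hqp : q < p) (e : K) :
    nilradical (MvPowerSeries (Fin 2) K ⧸ cuspIdeal p q e) =
      (mxR K 2).map (Ideal.Quotient.mk (cuspIdeal p q e)) :=
  nilradical_quotient_eq_map_mxR (le_mxR (by omega) q e) (mxR_pow_le hqp e (Nat.lt_succ_self _))

theorem mem_nilradical_sq_of_sq_eq_zero (he : e ≠ 0)
    {a : MvPowerSeries (Fin 2) K ⧸ cuspIdeal 3 1 e} (ha : a ^ 2 = 0) :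
    a ∈ nilradical (MvPowerSeries (Fin 2) K ⧸ cuspIdeal 3 1 e) ^ 2 := by
  obtain ⟨f, rfl⟩ := Ideal.Quotient.mk_surjective a
  rw [← map_pow, Ideal.Quotient.eq_zero_iff_mem] at ha
  rw [nilradical_quotient_eq (by norm_num), ← Ideal.map_pow]
  exact Ideal.mem_map_of_mem _ (mem_mxR_sq_of_sq_mem he ha)

theorem mk_psX_one_notMem_nilradical_sq (hq : 0 < q) (hqp : q < p) (e : K) :
    Ideal.Quotient.mk (cuspIdeal p q e) (psX 1) ∉
      nilradical (MvPowerSeries (Fin 2) K ⧸ cuspIdeal p q e) ^ 2 := by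
  rw [nilradical_quotient_eq hqp, ← Ideal.map_pow, Ideal.mem_quotient_iff_mem_sup, sup_comm,
    mem_sup_mxR_pow_iff hqp]
  intro h
  have hy : cuspCoeff p q e 0 1 (psX 1) = 1 := by
    simpa using cuspCoeff_psX_pow_mul_psX_pow p e 0 1 0 (Nat.one_le_of_lt hq)
  exact one_ne_zero (hy.symm.trans (h 0 p.zero_le 1 hq one_lt_two))

theorem isEmpty_ringEquiv (he : e ≠ 0) :
    IsEmpty ((MvPowerSeries (Fin 2) K ⧸ cuspIdeal 3 1 e) ≃+*
      (MvPowerSeries (Fin 2) K ⧸ cuspIdeal 3 1 (0 : K))) := by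
  refine ⟨fun φ => ?_⟩
  let y := Ideal.Quotient.mk (cuspIdeal 3 1 (0 : K)) (psX 1)
  have hy : y ^ 2 = 0 := by
    rw [← map_pow, Ideal.Quotient.eq_zero_iff_mem]
    simpa using psX_one_pow_sub_mem 3 1 (0 : K)
  have hφy : φ.symm y ∈ nilradical (MvPowerSeries (Fin 2) K ⧸ cuspIdeal 3 1 e) ^ 2 :=
    mem_nilradical_sq_of_sq_eq_zero he (by rw [← map_pow, hy, map_zero])
  have hφφy := map_mem_nilradical_pow φ.toRingHom hφy
  rw [RingEquiv.toRingHom_eq_coe, RingEquiv.coe_toRingHom, φ.apply_symm_apply] at hφφy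
  exact mk_psX_one_notMem_nilradical_sq one_pos (by norm_num) 0 hφφy

end cuspIdeal

theorem not_canonically_graded_example_general {K : Type*} [Field K] :
    socDimQ (Ideal.span {psX 0 ^ 4, -psX 0 ^ 3 + psX 1 ^ 2} :
        Ideal (MvPowerSeries (Fin 2) K)) = 1 ∧
    hilbQ (Ideal.span {psX 0 ^ 4, -psX 0 ^ 3 + psX 1 ^ 2} :
        Ideal (MvPowerSeries (Fin 2) K)) 0 = 1 ∧
    hilbQ (Ideal.span {psX 0 ^ 4, -psX 0 ^ 3 + psX 1 ^ 2} :
        Ideal (MvPowerSeries (Fin 2) K)) 1 = 2 ∧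
    hilbQ (Ideal.span {psX 0 ^ 4, -psX 0 ^ 3 + psX 1 ^ 2} :
        Ideal (MvPowerSeries (Fin 2) K)) 2 = 2 ∧
    hilbQ (Ideal.span {psX 0 ^ 4, -psX 0 ^ 3 + psX 1 ^ 2} :
        Ideal (MvPowerSeries (Fin 2) K)) 3 = 2 ∧
    hilbQ (Ideal.span {psX 0 ^ 4, -psX 0 ^ 3 + psX 1 ^ 2} :
        Ideal (MvPowerSeries (Fin 2) K)) 4 = 1 ∧
    mxR K 2 ^ 5 ≤ (Ideal.span {psX 0 ^ 4, -psX 0 ^ 3 + psX 1 ^ 2} :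
        Ideal (MvPowerSeries (Fin 2) K)) ∧
    Nonempty ((MvPowerSeries (Fin 2) K ⧸
        initialIdeal (Ideal.span {psX 0 ^ 4, -psX 0 ^ 3 + psX 1 ^ 2} :
          Ideal (MvPowerSeries (Fin 2) K))) ≃ₐ[K]
      (MvPowerSeries (Fin 2) K ⧸
        (Ideal.span {psX 0 ^ 4, psX 1 ^ 2} : Ideal (MvPowerSeries (Fin 2) K)))) ∧
    ¬ Nonempty ((MvPowerSeries (Fin 2) K ⧸
        (Ideal.span {psX 0 ^ 4, -psX 0 ^ 3 + psX 1 ^ 2} :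
          Ideal (MvPowerSeries (Fin 2) K))) ≃ₐ[K]
      (MvPowerSeries (Fin 2) K ⧸
        initialIdeal (Ideal.span {psX 0 ^ 4, -psX 0 ^ 3 + psX 1 ^ 2} :
          Ideal (MvPowerSeries (Fin 2) K)))) := by
  have hA : (Ideal.span {psX 0 ^ 4, -psX 0 ^ 3 + psX 1 ^ 2} : Ideal (MvPowerSeries (Fin 2) K)) =
      cuspIdeal 3 1 1 := by
    rw [cuspIdeal, one_smul, neg_add_eq_sub]
  have hG : (Ideal.span {psX 0 ^ 4, psX 1 ^ 2} : Ideal (MvPowerSeries (Fin 2) K)) =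
      cuspIdeal 3 1 0 := by
    rw [cuspIdeal, zero_smul, sub_zero]
  have hilb (d : ℕ) := cuspIdeal.hilbQ_eq (q := 1) (p := 3) (by norm_num) (1 : K) d
  rw [hA, hG, cuspIdeal.initialIdeal_eq (by norm_num)]
  refine ⟨cuspIdeal.socDimQ_eq_one (by norm_num) 1 1, ?_, ?_, ?_, ?_, ?_,
    cuspIdeal.mxR_pow_le (by norm_num) 1 (by norm_num), ⟨AlgEquiv.refl⟩,
    fun ⟨φ⟩ => (cuspIdeal.isEmpty_ringEquiv one_ne_zero).false φ.toRingEquiv⟩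
  all_goals (rw [hilb]; decide)

/-- The ring `A = K[[x_1,x_2]]/(x_1^4, -x_1^3 + x_2^2)` is an Artinian
Gorenstein local `K`-algebra with Hilbert function `{1,2,2,2,1}`, its associated
graded ring is isomorphic to `K[[x_1,x_2]]/(x_1^4, x_2^2)`, and `A` is *not*
isomorphic (as a `K`-algebra) to its associated graded ring. -/
theorem not_canonically_graded_example
    {K : Type*} [Field K] [IsAlgClosed K] [CharZero K] :
    socDimQ (Ideal.span {psX 0 ^ 4, -psX 0 ^ 3 + psX 1 ^ 2} :
        Ideal (MvPowerSeries (Fin 2) K)) = 1 ∧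
    hilbQ (Ideal.span {psX 0 ^ 4, -psX 0 ^ 3 + psX 1 ^ 2} :
        Ideal (MvPowerSeries (Fin 2) K)) 0 = 1 ∧
    hilbQ (Ideal.span {psX 0 ^ 4, -psX 0 ^ 3 + psX 1 ^ 2} :
        Ideal (MvPowerSeries (Fin 2) K)) 1 = 2 ∧
    hilbQ (Ideal.span {psX 0 ^ 4, -psX 0 ^ 3 + psX 1 ^ 2} :
        Ideal (MvPowerSeries (Fin 2) K)) 2 = 2 ∧
    hilbQ (Ideal.span {psX 0 ^ 4, -psX 0 ^ 3 + psX 1 ^ 2} :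
        Ideal (MvPowerSeries (Fin 2) K)) 3 = 2 ∧
    hilbQ (Ideal.span {psX 0 ^ 4, -psX 0 ^ 3 + psX 1 ^ 2} :
        Ideal (MvPowerSeries (Fin 2) K)) 4 = 1 ∧
    mxR K 2 ^ 5 ≤ (Ideal.span {psX 0 ^ 4, -psX 0 ^ 3 + psX 1 ^ 2} :
        Ideal (MvPowerSeries (Fin 2) K)) ∧
    Nonempty ((MvPowerSeries (Fin 2) K ⧸
        initialIdeal (Ideal.span {psX 0 ^ 4, -psX 0 ^ 3 + psX 1 ^ 2} :
          Ideal (MvPowerSeries (Fin 2) K))) ≃ₐ[K]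
      (MvPowerSeries (Fin 2) K ⧸
        (Ideal.span {psX 0 ^ 4, psX 1 ^ 2} : Ideal (MvPowerSeries (Fin 2) K)))) ∧
    ¬ Nonempty ((MvPowerSeries (Fin 2) K ⧸
        (Ideal.span {psX 0 ^ 4, -psX 0 ^ 3 + psX 1 ^ 2} :
          Ideal (MvPowerSeries (Fin 2) K))) ≃ₐ[K]
      (MvPowerSeries (Fin 2) K ⧸
        initialIdeal (Ideal.span {psX 0 ^ 4, -psX 0 ^ 3 + psX 1 ^ 2} :
          Ideal (MvPowerSeries (Fin 2) K)))) :=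
  not_canonically_graded_example_general (K := K)
end
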